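/- arXiv:1001.1783 — 5 statements merged into one kernel-verified Lean document; each statement's English description precedes it below -/
import Mathlib

section
/- For every n ≥ 0, the number of nonzero entries on row n of Pascal's triangle modulo 9 satisfies, as an identity in the rational numbers, a_9(n) = 2^{|n|_1} · 3^{|n|_2} · (1 + |n|_{10} + (1/4)|n|_{11} + (4/3)|n|_{20} + (1/3)|n|_{21}), where subword counts are taken in the base-3 representation of n. -/
/-- The number of integers `0 ≤ m ≤ n` such that `C(n,m)` is not divisible by `k`,
i.e. the number of nonzero entries on row `n` of Pascal's triangle modulo `k`. -/
def rowCount (k n : ℕ) : ℕ :=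
  ((Finset.range (n + 1)).filter fun m => ¬ k ∣ n.choose m).card

/-- The number of borrows when subtracting `m` from `n` in base `b` (for `m ≤ n`):
the number of indices `i ≥ 0` with `m mod b^(i+1) > n mod b^(i+1)`. -/
def borrowCount (b n m : ℕ) : ℕ :=
  ((Finset.range (Nat.digits b n).length).filter fun i => n % b ^ (i + 1) < m % b ^ (i + 1)).card

/-- `A_n(β)`: the number of `0 ≤ m ≤ n` with exactly `β` borrows
when subtracting `m` from `n` in base `b`. -/
def borrowA (b n β : ℕ) : ℕ :=
  ((Finset.range (n + 1)).filter fun m => borrowCount b n m = β).card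

/-- `B_n(β)` with respect to `L` digit positions: the number of `n < m ≤ b^L - 1` such that
exactly `β` of the indices `0 ≤ i ≤ L - 1` satisfy `m mod b^(i+1) > n mod b^(i+1)`. -/
def borrowB (b L n β : ℕ) : ℕ :=
  ((Finset.Ioc n (b ^ L - 1)).filter fun m =>
    ((Finset.range L).filter fun i => n % b ^ (i + 1) < m % b ^ (i + 1)).card = β).card

/-- The base-`b` digit string of `n`, most significant digit first (empty for `n = 0`). -/
def wordOf (b n : ℕ) : List ℕ := (Nat.digits b n).reverse

/-- `|n|_w`: the number of occurrences of `w` as a contiguous subword of the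
base-`b` digit string of `n`. -/
def subwordCount (b n : ℕ) (w : List ℕ) : ℕ :=
  ((Finset.range ((wordOf b n).length + 1 - w.length)).filter fun s =>
    ((wordOf b n).drop s).take w.length = w).card

/-- `c(w_k ⋯ w_0)` for a word `w = [w_k, …, w_0]` (most significant letter first):
`(w_k/(w_k+1)) · (∏_{h=1}^{k−1} (b−w_{k−h})/(w_{k−h}+1)) · (b−w_0−1)/(w_0+1)`. -/
def cword (b : ℕ) (w : List ℕ) : ℚ :=
  ((w.getD 0 0 : ℚ) / ((w.getD 0 0 : ℚ) + 1)) *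
    (∏ h ∈ Finset.Ico 1 (w.length - 1),
      ((b : ℚ) - (w.getD h 0 : ℚ)) / ((w.getD h 0 : ℚ) + 1)) *
    (((b : ℚ) - (w.getD (w.length - 1) 0 : ℚ) - 1) / ((w.getD (w.length - 1) 0 : ℚ) + 1))

/-- The sum `Σ c(v)c(w)⋯c(z)` over all sets of pairwise nonoverlapping contiguous subwords
of `W` (identified by their position intervals: a pair `(s, len)` denotes the subword
occupying positions `s, …, s+len-1`) whose multiset of lengths equals `P`. -/
def nonoverlapSum (b : ℕ) (W : List ℕ) (P : Multiset ℕ) : ℚ :=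
  ∑ S ∈ ((Finset.range W.length ×ˢ Finset.Icc 1 W.length).powerset.filter fun S =>
      Multiset.map Prod.snd S.val = P ∧
      (∀ q ∈ S, q.1 + q.2 ≤ W.length) ∧
      (∀ q ∈ S, ∀ r ∈ S, q ≠ r → q.1 + q.2 ≤ r.1 ∨ r.1 + r.2 ≤ q.1)),
    ∏ q ∈ S, cword b ((W.drop q.1).take q.2)

theorem cop3 (q i : ℕ) (h : i = 1 ∨ i = 2) : Nat.Coprime 3 (3 * q + i) := by
  rw [Nat.Prime.coprime_iff_not_dvd Nat.prime_three]; omega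

theorem addfac (a b : ℕ) : (a + b).choose a * a.factorial * b.factorial = (a + b).factorial := by
  rw [Nat.choose_symm_add, Nat.add_choose_mul_factorial_mul_factorial]

theorem fact3 (q r : ℕ) (hr : r < 3) :
    ∃ U : ℕ, Nat.Coprime 3 U ∧ (3 * q + r).factorial = 3 ^ q * q.factorial * U := by
  have base : ∀ q : ℕ, ∃ U : ℕ, Nat.Coprime 3 U ∧ (3 * q).factorial = 3 ^ q * q.factorial * U := by
    intro q
    induction q with
    | zero => exact ⟨1, by norm_num, by norm_num⟩
    | succ q ih =>
      obtain ⟨U, hU, h⟩ := ih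
      refine ⟨U * ((3 * q + 1) * (3 * q + 2)), ?_, ?_⟩
      · exact hU.mul_right (Nat.Coprime.mul_right (cop3 q 1 (by simp)) (cop3 q 2 (by simp)))
      · rw [show 3 * (q + 1) = 3 * q + 1 + 1 + 1 by ring, Nat.factorial_succ, Nat.factorial_succ,
          Nat.factorial_succ, h, Nat.factorial_succ q]
        ring
  obtain ⟨U, hU, h⟩ := base q
  interval_cases r
  · exact ⟨U, hU, h⟩
  · refine ⟨U * (3 * q + 1), hU.mul_right (by simp), ?_⟩
    rw [Nat.factorial_succ, h]; ring
  · refine ⟨U * ((3 * q + 1) * (3 * q + 2)),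
      hU.mul_right (Nat.Coprime.mul_right (cop3 q 1 (by simp)) (cop3 q 2 (by simp))), ?_⟩
    rw [Nat.factorial_succ, Nat.factorial_succ, h]; ring

theorem dvd_aux (k c d U V : ℕ) (hU : Nat.Coprime 3 U) (hV : Nat.Coprime 3 V)
    (h : c * U = d * V) : 3 ^ k ∣ c ↔ 3 ^ k ∣ d := by
  rw [← (Nat.Coprime.pow_left k hU).dvd_mul_right, h, (Nat.Coprime.pow_left k hV).dvd_mul_right]

theorem choose_noborrow (k q p r s : ℕ) (hr : r < 3) (hs : s ≤ r) :
    3 ^ k ∣ (3 * q + r).choose (3 * p + s) ↔ 3 ^ k ∣ q.choose p := by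
  by_cases hp : p ≤ q
  · obtain ⟨d, rfl⟩ := Nat.exists_eq_add_of_le hp
    obtain ⟨e, rfl⟩ := Nat.exists_eq_add_of_le hs
    obtain ⟨U, hU, h0⟩ := fact3 (p + d) (s + e) hr
    obtain ⟨V, hV, h1⟩ := fact3 p s (by omega)
    obtain ⟨W, hW, h2⟩ := fact3 d e (by omega)
    refine dvd_aux k _ _ (V * W) U (hV.mul_right hW) hU ?_
    have e1 := addfac (3 * p + s) (3 * d + e)
    have e2 := addfac p d
    rw [show 3 * p + s + (3 * d + e) = 3 * (p + d) + (s + e) by ring] at e1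
    rw [h0, h1, h2, ← e2] at e1
    have hpos : 0 < 3 ^ p * 3 ^ d * p.factorial * d.factorial := by positivity
    apply Nat.eq_of_mul_eq_mul_left hpos
    rw [pow_add] at e1
    linarith
  · rw [Nat.choose_eq_zero_of_lt (by omega), Nat.choose_eq_zero_of_lt (by omega)]

theorem choose_borrow (k q p r s : ℕ) (hs : s < 3) (hr : r < s) :
    3 ^ k ∣ (3 * q + r).choose (3 * p + s) ↔ 3 ^ k ∣ 3 * (q * (q - 1).choose p) := by
  by_cases hp : p < q
  · obtain ⟨d, rfl⟩ := Nat.exists_eq_add_of_lt hp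
    obtain ⟨e, he⟩ := Nat.exists_eq_add_of_le (show s ≤ r + 3 by omega)
    obtain ⟨U, hU, h0⟩ := fact3 (p + d + 1) r (by omega)
    obtain ⟨V, hV, h1⟩ := fact3 p s (by omega)
    obtain ⟨W, hW, h2⟩ := fact3 d e (by omega)
    refine dvd_aux k _ _ (V * W) U (hV.mul_right hW) hU ?_
    have e1 := addfac (3 * p + s) (3 * d + e)
    have e2 := addfac p d
    rw [show 3 * p + s + (3 * d + e) = 3 * (p + d + 1) + r by omega] at e1
    rw [h0, h1, h2, Nat.factorial_succ, ← e2] at e1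
    have hpos : 0 < 3 ^ p * 3 ^ d * p.factorial * d.factorial := by positivity
    apply Nat.eq_of_mul_eq_mul_left hpos
    rw [pow_succ, pow_add] at e1
    rw [Nat.add_sub_cancel]
    linarith
  · rw [Nat.choose_eq_zero_of_lt (show 3 * q + r < 3 * p + s by omega)]
    rcases Nat.eq_zero_or_pos q with rfl | hq
    · simp
    · rw [Nat.choose_eq_zero_of_lt (show q - 1 < p by omega)]; simp

theorem rowCount_eq (k n N : ℕ) (h : n < N) :
    rowCount k n = ∑ m ∈ Finset.range N, if k ∣ n.choose m then 0 else 1 := by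
  have : rowCount k n = ∑ m ∈ Finset.range (n + 1), if k ∣ n.choose m then 0 else 1 := by
    unfold rowCount
    rw [Finset.card_filter]
    refine Finset.sum_congr rfl fun m _ => ?_
    split_ifs <;> simp_all
  rw [this]
  apply Finset.sum_subset
  · intro x; simp; omega
  · intro x _ hx
    simp at hx
    rw [Nat.choose_eq_zero_of_lt (by omega)]; simp

theorem row_zero (k : ℕ) (hk : k ≠ 1) : rowCount k 0 = 1 := by
  rw [rowCount_eq k 0 1 (by omega)]; simp [hk]

theorem sum3 (f : ℕ → ℕ) (N : ℕ) :
    ∑ m ∈ Finset.range (3 * N), f m =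
      ∑ p ∈ Finset.range N, (f (3 * p + 0) + f (3 * p + 1) + f (3 * p + 2)) := by
  induction N with
  | zero => simp
  | succ N ih =>
    rw [Finset.sum_range_succ, ← ih, show 3 * (N + 1) = 3 * N + 1 + 1 + 1 by ring,
      Finset.sum_range_succ, Finset.sum_range_succ, Finset.sum_range_succ]
    simp only [add_zero]
    ring

def dcount (k q : ℕ) : ℕ :=
  ∑ p ∈ Finset.range (q + 1), if 3 ^ k ∣ 3 * (q * (q - 1).choose p) then 0 else 1

theorem rowCount_rec (k q r : ℕ) (hr : r < 3) :
    rowCount (3 ^ k) (3 * q + r) = (r + 1) * rowCount (3 ^ k) q + (2 - r) * dcount k q := by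
  rw [rowCount_eq _ _ (3 * (q + 1)) (by omega), sum3, rowCount_eq _ q (q + 1) (by omega), dcount,
    Finset.mul_sum, Finset.mul_sum, ← Finset.sum_add_distrib]
  refine Finset.sum_congr rfl fun p _ => ?_
  interval_cases r
  · simp only [choose_noborrow k q p 0 0 (by omega) (by omega),
      choose_borrow k q p 0 1 (by omega) (by omega), choose_borrow k q p 0 2 (by omega) (by omega)]
    ring
  · simp only [choose_noborrow k q p 1 0 (by omega) (by omega),
      choose_noborrow k q p 1 1 (by omega) (by omega), choose_borrow k q p 1 2 (by omega) (by omega)]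
    ring
  · simp only [choose_noborrow k q p 2 0 (by omega) (by omega),
      choose_noborrow k q p 2 1 (by omega) (by omega),
      choose_noborrow k q p 2 2 (by omega) (by omega)]
    ring

theorem row3_rec (q r : ℕ) (hr : r < 3) :
    rowCount 3 (3 * q + r) = (r + 1) * rowCount 3 q := by
  have h := rowCount_rec 1 q r hr
  have : dcount 1 q = 0 := by simp [dcount]
  simpa [this] using h

theorem dcount2 (t u : ℕ) (hu : u < 3) : dcount 2 (3 * t + u) = u * rowCount 3 t := by
  unfold dcount
  have e : ∀ x, 3 ^ 2 ∣ 3 * x ↔ 3 ∣ x := fun x => by omega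
  simp only [e]
  rcases Nat.eq_zero_or_pos u with rfl | h
  · rw [zero_mul]
    refine Finset.sum_eq_zero fun p _ => ?_
    rw [if_pos]
    exact Dvd.dvd.mul_right (by simp) _
  · obtain ⟨v, rfl⟩ : ∃ v, u = v + 1 := ⟨u - 1, by omega⟩
    rw [← row3_rec t v (by omega), rowCount_eq 3 _ (3 * t + (v + 1) + 1) (by omega)]
    refine Finset.sum_congr rfl fun p _ => ?_
    have hc : Nat.Coprime 3 (3 * t + (v + 1)) := by
      rw [Nat.Prime.coprime_iff_not_dvd Nat.prime_three]; omega
    simp only [hc.dvd_mul_left, show 3 * t + (v + 1) - 1 = 3 * t + v by omega]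

theorem wordOf_rec (q r : ℕ) (hr : r < 3) (h : 0 < 3 * q + r) :
    wordOf 3 (3 * q + r) = wordOf 3 q ++ [r] := by
  unfold wordOf
  rw [Nat.digits_def' (by norm_num) h, show (3 * q + r) % 3 = r by omega,
    show (3 * q + r) / 3 = q by omega]
  simp

theorem sc1 (q r a : ℕ) (hr : r < 3) (ha : a ≠ 0) :
    subwordCount 3 (3 * q + r) [a] = subwordCount 3 q [a] + if r = a then 1 else 0 := by
  rcases Nat.eq_zero_or_pos (3 * q + r) with h | h
  · obtain ⟨rfl, rfl⟩ : q = 0 ∧ r = 0 := by omega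
    simp [ha.symm]
  · unfold subwordCount
    rw [wordOf_rec q r hr h]
    generalize wordOf 3 q = W
    simp only [List.length_append, List.length_cons, List.length_nil, Finset.card_filter]
    rw [show W.length + (0 + 1) + 1 - (0 + 1) = W.length + 1 by omega, Finset.sum_range_succ]
    congr 1
    · refine Finset.sum_congr rfl fun s hs => ?_
      simp at hs
      rw [List.drop_append_of_le_length (by omega), List.take_append_of_le_length]
      simp; omega
    · simp

theorem sc2 (q r a b : ℕ) (hr : r < 3) (ha : a ≠ 0) :
    subwordCount 3 (3 * q + r) [a, b] =
      subwordCount 3 q [a, b] + if q % 3 = a ∧ r = b then 1 else 0 := by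
  rcases Nat.eq_zero_or_pos q with rfl | hq
  · rw [if_neg (by omega)]
    interval_cases r <;> simp [subwordCount, wordOf]
  · unfold subwordCount
    rw [wordOf_rec q r hr (by omega)]
    obtain ⟨V, hV⟩ : ∃ V, wordOf 3 q = V ++ [q % 3] := by
      refine ⟨wordOf 3 (q / 3), ?_⟩
      rw [← wordOf_rec (q / 3) (q % 3) (by omega) (by omega)]
      congr 1; omega
    rw [hV]
    simp only [List.length_append, List.length_cons, List.length_nil, Finset.card_filter]
    rw [show V.length + (0 + 1) + (0 + 1) + 1 - (0 + 1 + 1) = V.length + 1 by omega,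
      Finset.sum_range_succ, show V.length + (0 + 1) + 1 - (0 + 1 + 1) = V.length by omega]
    congr 1
    · refine Finset.sum_congr rfl fun s hs => ?_
      simp only [Finset.mem_range] at hs
      rw [List.drop_append_of_le_length (by simp; omega), List.take_append_of_le_length]
      simp; omega
    · simp

theorem row3 (n : ℕ) :
    rowCount 3 n = 2 ^ subwordCount 3 n [1] * 3 ^ subwordCount 3 n [2] := by
  induction n using Nat.strong_induction_on with
  | _ n ih =>
    rcases Nat.eq_zero_or_pos n with rfl | hn
    · simp [row_zero, subwordCount, wordOf]
    · obtain ⟨q, r, hr, rfl⟩ : ∃ q r, r < 3 ∧ n = 3 * q + r :=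
        ⟨n / 3, n % 3, by omega, by omega⟩
      rw [row3_rec q r hr, ih q (by omega), sc1 q r 1 hr (by omega), sc1 q r 2 hr (by omega)]
      interval_cases r <;> simp [pow_succ] <;> ring

/-- For every `n ≥ 0`, as an identity in the rational numbers:
`a_9(n) = 2^{|n|_1} · 3^{|n|_2} · (1 + |n|_{10} + (1/4)|n|_{11} + (4/3)|n|_{20} + (1/3)|n|_{21})`,
subword counts taken in base 3. -/
theorem stmt14 (n : ℕ) :
    (rowCount 9 n : ℚ) =
      2 ^ subwordCount 3 n [1] * 3 ^ subwordCount 3 n [2] *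
        (1 + (subwordCount 3 n [1, 0] : ℚ) + (1 / 4) * (subwordCount 3 n [1, 1] : ℚ) +
          (4 / 3) * (subwordCount 3 n [2, 0] : ℚ) + (1 / 3) * (subwordCount 3 n [2, 1] : ℚ)) := by
  induction n using Nat.strong_induction_on with
  | _ n ih =>
    rcases Nat.eq_zero_or_pos n with rfl | hn
    · simp [row_zero, subwordCount, wordOf]
    · obtain ⟨q, r, hr, rfl⟩ : ∃ q r, r < 3 ∧ n = 3 * q + r :=
        ⟨n / 3, n % 3, by omega, by omega⟩
      have h9 := rowCount_rec 2 q r hr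
      have hq := ih q (by omega)
      obtain ⟨t, u, hu, hqt⟩ : ∃ t u, u < 3 ∧ q = 3 * t + u :=
        ⟨q / 3, q % 3, by omega, by omega⟩
      have hd : (u + 1) * dcount 2 q = u * rowCount 3 q := by
        rw [hqt, dcount2 t u hu, row3_rec t u hu]; ring
      have hm : q % 3 = u := by omega
      rw [row3 q] at hd
      norm_num at h9
      rw [h9, sc1 q r 1 hr (by omega), sc1 q r 2 hr (by omega), sc2 q r 1 0 hr (by omega),
        sc2 q r 1 1 hr (by omega), sc2 q r 2 0 hr (by omega), sc2 q r 2 1 hr (by omega), hm]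
      clear h9 ih hqt hm hn
      have hd' : ((u : ℚ) + 1) * dcount 2 q =
          u * (2 ^ subwordCount 3 q [1] * 3 ^ subwordCount 3 q [2]) := by exact_mod_cast hd
      clear hd
      interval_cases r <;> interval_cases u <;> norm_num [pow_succ] at hd' ⊢ <;> 
        (try rw [hq]) <;> (try rw [hd']) <;> linarith
end

section
/- For every n ≥ 0, the number of nonzero entries on row n of Pascal's triangle modulo 8 satisfies, as an identity in the rational numbers, a_8(n) = 2^{|n|_1} · (1 + (3/8)|n|_{10} + |n|_{100} + (1/4)|n|_{110} + (1/8)|n|_{10}^2), where subword counts are taken in the base-2 representation of n. -/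
namespace S16

def A (k n : ℕ) : ℕ := ∑ m ∈ Finset.range (n + 1), if 2 ^ k ∣ n.choose m then 0 else 1
def B (k n : ℕ) : ℕ := ∑ m ∈ Finset.range n, if 2 ^ k ∣ n * (n - 1).choose m then 0 else 1

lemma sum_two (f : ℕ → ℕ) (n : ℕ) :
    ∑ m ∈ Finset.range (2 * n), f m = ∑ m ∈ Finset.range n, (f (2 * m) + f (2 * m + 1)) := by
  induction n with
  | zero => simp
  | succ n ih =>
    rw [show 2 * (n + 1) = 2 * n + 1 + 1 by ring, Finset.sum_range_succ, Finset.sum_range_succ, ih,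
      Finset.sum_range_succ]
    ring

lemma odd_dvd {k u v x y : ℕ} (hu : u % 2 = 1) (hv : v % 2 = 1) (h : u * x = v * y) :
    (2 ^ k ∣ x ↔ 2 ^ k ∣ y) := by
  have cu : Nat.Coprime (2 ^ k) u :=
    Nat.Coprime.pow_left _ (Nat.coprime_two_left.2 (Nat.odd_iff.2 hu))
  have cv : Nat.Coprime (2 ^ k) v :=
    Nat.Coprime.pow_left _ (Nat.coprime_two_left.2 (Nat.odd_iff.2 hv))
  rw [← cu.dvd_mul_left, h, cv.dvd_mul_left]

lemma digsum (n : ℕ) : (Nat.digits 2 (2 * n)).sum = (Nat.digits 2 n).sum := by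
  rcases Nat.eq_zero_or_pos n with rfl | h
  · simp
  · have := Nat.digits_add 2 (by norm_num) 0 n (by norm_num) (by omega)
    rw [zero_add] at this
    rw [this]; simp

lemma mulc {x y : ℕ} (c : ℕ) (hx : x ≠ 0) (hy : y ≠ 0) (h : ∀ k, 2 ^ k ∣ x ↔ 2 ^ k ∣ y) (k : ℕ) :
    2 ^ k ∣ c * x ↔ 2 ^ k ∣ c * y := by
  rcases eq_or_ne c 0 with rfl | hc
  · simp
  have h' : ∀ k, k ≤ padicValNat 2 x ↔ k ≤ padicValNat 2 y := fun k => by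
    rw [← padicValNat_dvd_iff_le hx, ← padicValNat_dvd_iff_le hy]; exact h k
  have e : padicValNat 2 x = padicValNat 2 y :=
    le_antisymm ((h' _).1 le_rfl) ((h' _).2 le_rfl)
  rw [padicValNat_dvd_iff_le (mul_ne_zero hc hx), padicValNat_dvd_iff_le (mul_ne_zero hc hy),
    padicValNat.mul hc hx, padicValNat.mul hc hy, e]

lemma ee (k n m : ℕ) : 2 ^ k ∣ (2 * n).choose (2 * m) ↔ 2 ^ k ∣ n.choose m := by
  rcases lt_or_ge n m with h | h
  · rw [Nat.choose_eq_zero_of_lt h, Nat.choose_eq_zero_of_lt (by omega)]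
  · have h1 := sub_one_mul_padicValNat_choose_eq_sub_sum_digits (p := 2) h
    have h2 := sub_one_mul_padicValNat_choose_eq_sub_sum_digits (p := 2)
      (show 2 * m ≤ 2 * n by omega)
    rw [← Nat.mul_sub, digsum, digsum, digsum, ← h1] at h2
    rw [padicValNat_dvd_iff_le (Nat.choose_pos h).ne',
      padicValNat_dvd_iff_le (Nat.choose_pos (by omega)).ne']
    omega

lemma oo (k n m : ℕ) : 2 ^ k ∣ (2 * n + 1).choose (2 * m + 1) ↔ 2 ^ k ∣ n.choose m := by
  rw [← ee k n m]
  have := Nat.add_one_mul_choose_eq (2 * n) (2 * m)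
  exact odd_dvd (u := 2 * m + 1) (v := 2 * n + 1) (by omega) (by omega) (by linarith)

lemma oe (k n m : ℕ) : 2 ^ k ∣ (2 * n + 1).choose (2 * m) ↔ 2 ^ k ∣ n.choose m := by
  rcases lt_or_ge n m with h | h
  · rw [Nat.choose_eq_zero_of_lt h, Nat.choose_eq_zero_of_lt (by omega)]
  rw [← Nat.choose_symm h, ← oo k n (n - m),
    ← Nat.choose_symm (show 2 * m ≤ 2 * n + 1 by omega)]
  rw [show 2 * n + 1 - 2 * m = 2 * (n - m) + 1 by omega]

lemma eo (k n m : ℕ) (hn : 0 < n) :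
    2 ^ (k + 1) ∣ (2 * n).choose (2 * m + 1) ↔ 2 ^ k ∣ n * (n - 1).choose m := by
  obtain ⟨n, rfl⟩ : ∃ j, n = j + 1 := ⟨n - 1, by omega⟩
  have h := Nat.add_one_mul_choose_eq (2 * n + 1) (2 * m)
  rw [odd_dvd (u := 2 * m + 1) (v := 1)
    (y := 2 * ((n + 1) * (2 * n + 1).choose (2 * m))) (by omega) (by omega)
    (by rw [show 2 * (n + 1) = 2 * n + 1 + 1 by ring]; linarith)]
  rw [pow_succ', Nat.mul_dvd_mul_iff_left (by norm_num)]
  simp only [Nat.add_sub_cancel]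
  rcases lt_or_ge n m with h | h
  · rw [Nat.choose_eq_zero_of_lt h, Nat.choose_eq_zero_of_lt (by omega)]
  exact mulc _ (Nat.choose_pos (by omega)).ne' (Nat.choose_pos h).ne' (fun k => oe k n m) k

lemma A_odd (k n : ℕ) : A k (2 * n + 1) = 2 * A k n := by
  unfold A
  rw [show 2 * n + 1 + 1 = 2 * (n + 1) by ring, sum_two, Finset.mul_sum]
  refine Finset.sum_congr rfl fun m _ => ?_
  simp only [oo, oe]; ring

lemma A_even (k n : ℕ) : A (k + 1) (2 * n) = A (k + 1) n + B k n := by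
  rcases Nat.eq_zero_or_pos n with rfl | hn
  · simp [B]
  unfold A B
  rw [Finset.sum_range_succ, sum_two, Finset.sum_range_succ, Finset.sum_add_distrib]
  simp only [ee, eo k n _ hn]; ring

lemma B_odd (k n : ℕ) : B k (2 * n + 1) = A k (2 * n) := by
  unfold A B
  refine Finset.sum_congr rfl fun m _ => ?_
  simp only [Nat.add_sub_cancel, odd_dvd (k := k) (x := (2 * n + 1) * (2 * n).choose m) (u := 1) (v := 2 * n + 1) (by omega) (by omega) (one_mul _)]

lemma B_even (k n : ℕ) : B (k + 1) (2 * n) = 2 * B k n := by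
  rcases Nat.eq_zero_or_pos n with rfl | hn
  · simp [B]
  unfold B
  rw [sum_two, Finset.mul_sum]
  refine Finset.sum_congr rfl fun m hm => ?_
  rw [Finset.mem_range] at hm
  obtain ⟨n, rfl⟩ : ∃ j, n = j + 1 := ⟨n - 1, by omega⟩
  have e : ∀ j, (2 ^ (k + 1) ∣ 2 * (n + 1) * (2 * n + 1).choose j ↔
      2 ^ k ∣ (n + 1) * (2 * n + 1).choose j) := fun j => by
    rw [pow_succ', mul_assoc, Nat.mul_dvd_mul_iff_left (by norm_num)]
  have e1 := mulc (n + 1) (Nat.choose_pos (by omega)).ne' (Nat.choose_pos (by omega)).ne'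
    (fun k => oe k n m) k
  have e2 := mulc (n + 1) (Nat.choose_pos (by omega)).ne' (Nat.choose_pos (by omega)).ne'
    (fun k => oo k n m) k
  rw [show 2 * (n + 1) - 1 = 2 * n + 1 by omega, Nat.add_sub_cancel]
  simp only [e, e1, e2]; ring

lemma B_zero (n : ℕ) : B 0 n = 0 := by simp [B]
lemma A_z (k : ℕ) : A (k + 1) 0 = 1 := by simp [A]

lemma row (n : ℕ) : rowCount 8 n = A 3 n := by
  unfold rowCount A
  rw [Finset.card_filter]
  refine Finset.sum_congr rfl fun m _ => ?_
  norm_num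

lemma cnt_rec (n d : ℕ) (hd : d < 2) (h : 0 < 2 * n + d) (w : List ℕ) (hw : w ≠ []) :
    subwordCount 2 (2 * n + d) w =
      subwordCount 2 n w + if w.reverse <+: d :: Nat.digits 2 n then 1 else 0 := by
  have hW : wordOf 2 (2 * n + d) = wordOf 2 n ++ [d] := by
    unfold wordOf
    rw [show 2 * n + d = d + 2 * n by ring, Nat.digits_add 2 (by norm_num) d n hd (by omega)]
    simp
  have hs : (w.reverse <+: d :: Nat.digits 2 n) ↔ w <:+ (wordOf 2 n ++ [d]) := by
    rw [← List.reverse_prefix]; simp [wordOf]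
  have hl : 0 < w.length := List.length_pos_iff.2 hw
  simp only [hs]
  unfold subwordCount
  rw [hW]
  generalize wordOf 2 n = W
  rcases lt_or_ge (W.length + 1) w.length with hc | hc
  · rw [if_neg (fun hh => by have := hh.length_le; simp at this; omega)]
    rw [show (W ++ [d]).length + 1 - w.length = 0 by simp; omega,
      show W.length + 1 - w.length = 0 by omega]
    simp
  · rw [show (W ++ [d]).length + 1 - w.length = W.length + 1 - w.length + 1 by simp; omega]
    rw [Finset.card_filter, Finset.sum_range_succ, Finset.card_filter]
    congr 1
    · refine Finset.sum_congr rfl fun s hs => ?_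
      rw [Finset.mem_range] at hs
      rw [List.drop_append_of_le_length (by omega), List.take_append_of_le_length (by simp; omega)]
    · rw [List.take_of_length_le (by simp; omega)]
      have e : (List.drop (W.length + 1 - w.length) (W ++ [d]) = w) ↔ w <:+ W ++ [d] := by
        rw [List.suffix_iff_eq_drop, List.length_append, List.length_singleton, eq_comm]
      simp only [e]

lemma A1 (n : ℕ) : A 1 n = 2 ^ subwordCount 2 n [1] := by
  induction n using Nat.strong_induction_on with
  | _ n ih =>
  rcases Nat.even_or_odd' n with ⟨k, rfl | rfl⟩
  · rcases Nat.eq_zero_or_pos k with rfl | hk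
    · simp [A_z, subwordCount, wordOf]
    · have := cnt_rec k 0 (by omega) (by omega) [1] (by simp)
      simp at this
      rw [A_even, B_zero, ih k (by omega), this, add_zero]
  · have := cnt_rec k 1 (by omega) (by omega) [1] (by simp)
    simp at this
    rw [A_odd, ih k (by omega), this, pow_succ, mul_comm]

lemma p1 (k : ℕ) : subwordCount 2 (2 * k + 1) [1] = subwordCount 2 k [1] + 1 := by
  simpa using cnt_rec k 1 (by omega) (by omega) [1] (by simp)
lemma p0 (k : ℕ) : subwordCount 2 (2 * k) [1] = subwordCount 2 k [1] := by
  rcases Nat.eq_zero_or_pos k with rfl | hk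
  · rfl
  simpa using cnt_rec k 0 (by omega) (by omega) [1] (by simp)
lemma odd0 (k : ℕ) (w : List ℕ) :
    subwordCount 2 (2 * k + 1) (w ++ [0]) = subwordCount 2 k (w ++ [0]) := by
  rw [cnt_rec k 1 (by omega) (by omega) (w ++ [0]) (by simp), if_neg, add_zero]
  rw [List.reverse_append, List.reverse_singleton, List.singleton_append, List.cons_prefix_cons]
  simp
lemma dodd (k : ℕ) : Nat.digits 2 (2 * k + 1) = 1 :: Nat.digits 2 k := by
  rw [show 2 * k + 1 = 1 + 2 * k by ring, Nat.digits_add 2 (by norm_num) 1 k (by omega) (by omega)]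
lemma deven (k : ℕ) (hk : 0 < k) : Nat.digits 2 (2 * k) = 0 :: Nat.digits 2 k := by
  have := Nat.digits_add 2 (by norm_num) 0 k (by norm_num) (by omega)
  rwa [zero_add] at this
lemma pre1 (k : ℕ) : [1] <+: Nat.digits 2 k ↔ k % 2 = 1 := by
  rcases Nat.even_or_odd' k with ⟨j, rfl | rfl⟩
  · rcases Nat.eq_zero_or_pos j with rfl | hj
    · simp
    · rw [deven j hj]; simp
  · rw [dodd]; simp
lemma pre01 (k : ℕ) : [0, 1] <+: Nat.digits 2 k ↔ k % 4 = 2 := by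
  rcases Nat.even_or_odd' k with ⟨j, rfl | rfl⟩
  · rcases Nat.eq_zero_or_pos j with rfl | hj
    · simp
    · rw [deven j hj, List.cons_prefix_cons, pre1]; omega
  · rw [dodd]; simp; omega
lemma pre11 (k : ℕ) : [1, 1] <+: Nat.digits 2 k ↔ k % 4 = 3 := by
  rcases Nat.even_or_odd' k with ⟨j, rfl | rfl⟩
  · rcases Nat.eq_zero_or_pos j with rfl | hj
    · simp
    · rw [deven j hj, List.cons_prefix_cons]; omega
  · rw [dodd, List.cons_prefix_cons, pre1]; omega
lemma ev10 (k : ℕ) : subwordCount 2 (2 * k) [1, 0] =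
    subwordCount 2 k [1, 0] + if k % 2 = 1 then 1 else 0 := by
  rcases Nat.eq_zero_or_pos k with rfl | hk
  · rfl
  simpa [pre1] using cnt_rec k 0 (by omega) (by omega) [1, 0] (by simp)
lemma ev100 (k : ℕ) : subwordCount 2 (2 * k) [1, 0, 0] =
    subwordCount 2 k [1, 0, 0] + if k % 4 = 2 then 1 else 0 := by
  rcases Nat.eq_zero_or_pos k with rfl | hk
  · rfl
  simpa [pre01] using cnt_rec k 0 (by omega) (by omega) [1, 0, 0] (by simp)
lemma ev110 (k : ℕ) : subwordCount 2 (2 * k) [1, 1, 0] =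
    subwordCount 2 k [1, 1, 0] + if k % 4 = 3 then 1 else 0 := by
  rcases Nat.eq_zero_or_pos k with rfl | hk
  · rfl
  simpa [pre11] using cnt_rec k 0 (by omega) (by omega) [1, 1, 0] (by simp)

lemma B1 (n : ℕ) : (B 1 n : ℚ) = if n % 2 = 1 then 2 ^ subwordCount 2 n [1] / 2 else 0 := by
  rcases Nat.even_or_odd' n with ⟨k, rfl | rfl⟩
  · rw [B_even, B_zero, if_neg (by omega)]; simp
  · rw [B_odd, if_pos (by omega), A1, p0, p1]; push_cast; ring

lemma A2 (n : ℕ) : (A 2 n : ℚ) = 2 ^ subwordCount 2 n [1] * (1 + subwordCount 2 n [1, 0] / 2) := by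
  induction n using Nat.strong_induction_on with
  | _ n ih =>
  rcases Nat.even_or_odd' n with ⟨k, rfl | rfl⟩
  · rcases Nat.eq_zero_or_pos k with rfl | hk
    · simp [A_z, subwordCount, wordOf]
    · rw [A_even]; push_cast
      rw [B1, ih k (by omega), p0, ev10]
      split_ifs <;> push_cast <;> ring
  · have := odd0 k [1]
    simp only [List.cons_append, List.nil_append] at this
    rw [A_odd, this, p1]; push_cast; rw [ih k (by omega)]; ring

end S16

open S16

/-- For every `n ≥ 0`, as an identity in the rational numbers:
`a_8(n) = 2^{|n|_1} · (1 + (3/8)|n|_{10} + |n|_{100} + (1/4)|n|_{110} + (1/8)|n|_{10}²)`,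
subword counts taken in base 2. -/
theorem stmt16 (n : ℕ) :
    (rowCount 8 n : ℚ) =
      2 ^ subwordCount 2 n [1] *
        (1 + (3 / 8) * (subwordCount 2 n [1, 0] : ℚ) + (subwordCount 2 n [1, 0, 0] : ℚ) +
          (1 / 4) * (subwordCount 2 n [1, 1, 0] : ℚ) +
          (1 / 8) * (subwordCount 2 n [1, 0] : ℚ) ^ 2) := by
  rw [row]
  induction n using Nat.strong_induction_on with
  | _ n ih =>
  rcases Nat.even_or_odd' n with ⟨k, rfl | rfl⟩
  · rcases Nat.eq_zero_or_pos k with rfl | hk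
    · simp [A_z, subwordCount, wordOf]
    · rw [A_even]; push_cast
      rw [ih k (by omega), p0, ev10, ev100, ev110]
      rcases Nat.even_or_odd' k with ⟨j, rfl | rfl⟩
      · rw [B_even]; push_cast
        rw [B1, p0, if_neg (show ¬ (2 * j % 2 = 1) by omega),
          if_neg (show ¬ (2 * j % 4 = 3) by omega)]
        by_cases hj : j % 2 = 1
        · rw [if_pos hj, if_pos (by omega)]; push_cast; ring
        · rw [if_neg hj, if_neg (by omega)]; push_cast; ring
      · have h1 := odd0 j [1]
        simp only [List.cons_append, List.nil_append] at h1
        rw [B_odd, A2, p0, p1, ev10, h1, if_pos (show (2 * j + 1) % 2 = 1 by omega),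
          if_neg (show ¬ ((2 * j + 1) % 4 = 2) by omega)]
        by_cases hj : j % 2 = 1
        · rw [if_pos hj, if_pos (by omega)]; push_cast; ring
        · rw [if_neg hj, if_neg (by omega)]; push_cast; ring
  · have h1 := odd0 k [1]
    have h2 := odd0 k [1, 0]
    have h3 := odd0 k [1, 1]
    simp only [List.cons_append, List.nil_append] at h1 h2 h3
    rw [A_odd, h1, h2, h3, p1]; push_cast; rw [ih k (by omega)]; ring
end

section
/- For every n ≥ 0, the number of nonzero entries on row n of Pascal's triangle modulo 27 satisfies, as an identity in the rational numbers, a_{27}(n) = 2^{|n|_1} · 3^{|n|_2} · (1 + (1/2)|n|_{10} + (7/32)|n|_{11} + (4/9)|n|_{20} + (5/18)|n|_{21} + 3|n|_{100} + (3/4)|n|_{101} + (3/4)|n|_{110} + (3/16)|n|_{111} + (1/3)|n|_{120} + (1/12)|n|_{121} + 4|n|_{200} + |n|_{201} + |n|_{210} + (1/4)|n|_{211} + (4/9)|n|_{220} + (1/9)|n|_{221} + (1/2)|n|_{10}^2 + (1/4)|n|_{10}|n|_{11} + (4/3)|n|_{10}|n|_{20} + (1/3)|n|_{10}|n|_{21}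 + (1/32)|n|_{11}^2 + (1/3)|n|_{11}|n|_{20} + (1/12)|n|_{11}|n|_{21} + (8/9)|n|_{20}^2 + (4/9)|n|_{20}|n|_{21} + (1/18)|n|_{21}^2), where subword counts are taken in the base-3 representation of n. -/
namespace S17

lemma fact_unit (n d : ℕ) (hd : d < 3) :
    ∃ u, Nat.Coprime 3 u ∧ (3 * n + d).factorial = 3 ^ n * n.factorial * u := by
  have step : ∀ n, (∃ u, Nat.Coprime 3 u ∧ (3 * n).factorial = 3 ^ n * n.factorial * u) →
      ∀ d < 3, ∃ u, Nat.Coprime 3 u ∧ (3 * n + d).factorial = 3 ^ n * n.factorial * u := by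
    rintro n ⟨u, hu, h⟩ d hd
    have h1 : Nat.Coprime 3 (3 * n + 1) := by simp
    have h2 : Nat.Coprime 3 (3 * n + 2) := by simp; decide
    interval_cases d
    · exact ⟨u, hu, h⟩
    · refine ⟨(3 * n + 1) * u, Nat.Coprime.mul_right h1 hu, ?_⟩
      rw [Nat.factorial_succ, h]; ring
    · refine ⟨(3 * n + 2) * ((3 * n + 1) * u),
        Nat.Coprime.mul_right h2 (Nat.Coprime.mul_right h1 hu), ?_⟩
      rw [Nat.factorial_succ, Nat.factorial_succ, h]; ring
  refine step n ?_ d hd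
  induction n with
  | zero => exact ⟨1, by simp, by simp⟩
  | succ n ih =>
    obtain ⟨u, hu, h⟩ := step n ih 2 (by norm_num)
    refine ⟨u, hu, ?_⟩
    rw [show 3 * (n + 1) = (3 * n + 2) + 1 by ring, Nat.factorial_succ, h, Nat.factorial_succ]
    ring

lemma dvd_of_unit {a b u v : ℕ} (k : ℕ) (hu : Nat.Coprime 3 u) (hv : Nat.Coprime 3 v)
    (h : a * u = b * v) : 3 ^ k ∣ a ↔ 3 ^ k ∣ b := by
  rw [← Nat.Coprime.dvd_mul_right (Nat.Coprime.pow_left k hu), h,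
    Nat.Coprime.dvd_mul_right (Nat.Coprime.pow_left k hv)]

lemma unit_mul {a u : ℕ} (k : ℕ) (hu : Nat.Coprime 3 u) : 3 ^ k ∣ u * a ↔ 3 ^ k ∣ a :=
  Nat.Coprime.dvd_mul_left (Nat.Coprime.pow_left k hu)

lemma three_mul' (a k : ℕ) : 3 ^ (k + 1) ∣ 3 * a ↔ 3 ^ k ∣ a := by
  rw [pow_succ', Nat.mul_dvd_mul_iff_left (by norm_num)]

lemma acm (i j : ℕ) :
    (i + j).choose i * i.factorial * j.factorial = (i + j).factorial := by
  rw [Nat.choose_symm_add]; exact Nat.add_choose_mul_factorial_mul_factorial i j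

lemma choose_le (n m d e k : ℕ) (hd : d < 3) (he : e ≤ d) :
    3 ^ k ∣ (3 * n + d).choose (3 * m + e) ↔ 3 ^ k ∣ n.choose m := by
  by_cases hm : m ≤ n
  · obtain ⟨r, rfl⟩ := Nat.exists_eq_add_of_le hm
    obtain ⟨c, rfl⟩ := Nat.exists_eq_add_of_le he
    obtain ⟨u1, h1, e1⟩ := fact_unit m e (by omega)
    obtain ⟨u2, h2, e2⟩ := fact_unit r c (by omega)
    obtain ⟨u3, h3, e3⟩ := fact_unit (m + r) (e + c) (by omega)
    have hc := acm m r
    have hc' := acm (3 * m + e) (3 * r + c)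
    rw [show 3 * m + e + (3 * r + c) = 3 * (m + r) + (e + c) by ring, e1, e2, e3, ← hc] at hc'
    refine dvd_of_unit k (Nat.Coprime.mul_right h1 h2) h3 ?_
    have hp : 0 < 3 ^ (m + r) * (m.factorial * r.factorial) := by positivity
    apply Nat.eq_of_mul_eq_mul_left hp
    rw [pow_add] at *
    linarith
  · rw [Nat.choose_eq_zero_of_lt (by omega), Nat.choose_eq_zero_of_lt (by omega)]

lemma choose_gt (n m d e k : ℕ) (hd : e < 3) (he : d < e) :
    3 ^ (k + 1) ∣ (3 * n + d).choose (3 * m + e) ↔ 3 ^ k ∣ (n - m) * n.choose m := by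
  by_cases hm : m < n
  · obtain ⟨r, rfl⟩ := Nat.exists_eq_add_of_lt hm
    obtain ⟨c, hc3⟩ : ∃ c, 3 + d = e + c := ⟨3 + d - e, by omega⟩
    obtain ⟨u1, h1, e1⟩ := fact_unit m e (by omega)
    obtain ⟨u2, h2, e2⟩ := fact_unit r c (by omega)
    obtain ⟨u3, h3, e3⟩ := fact_unit (m + (r + 1)) d (by omega)
    have hc := acm m (r + 1)
    have hc' := acm (3 * m + e) (3 * r + c)
    rw [show 3 * m + e + (3 * r + c) = 3 * (m + (r + 1)) + d by linarith, e1, e2, e3, ← hc,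
      Nat.factorial_succ] at hc'
    rw [show m + r + 1 = m + (r + 1) by ring, Nat.add_sub_cancel_left,
      ← three_mul' ((r + 1) * (m + (r + 1)).choose m) k]
    refine dvd_of_unit (k + 1) (Nat.Coprime.mul_right h1 h2) h3 ?_
    have hp : 0 < 3 ^ (m + r) * (m.factorial * r.factorial) := by positivity
    apply Nat.eq_of_mul_eq_mul_left hp
    rw [pow_add] at *
    rw [pow_succ] at hc'
    linarith
  · rw [Nat.choose_eq_zero_of_lt (by omega), Nat.sub_eq_zero_of_le (by omega)]; simp

lemma cop (a c : ℕ) (h : c = 1 ∨ c = 2) : Nat.Coprime 3 (3 * a + c) := by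
  rcases h with rfl | rfl <;> simp
  decide

lemma bch_lt (n m d e k : ℕ) (hd : d < 3) (he : e < d) :
    3 ^ k ∣ ((3 * n + d) - (3 * m + e)) * (3 * n + d).choose (3 * m + e) ↔ 3 ^ k ∣ n.choose m := by
  by_cases hm : m ≤ n
  · rw [show (3 * n + d) - (3 * m + e) = 3 * (n - m) + (d - e) by omega,
      unit_mul k (cop _ _ (by omega)), choose_le n m d e k hd he.le]
  · rw [Nat.choose_eq_zero_of_lt (by omega), Nat.choose_eq_zero_of_lt (by omega)]; simp

lemma bch_eq (n m d k : ℕ) (hd : d < 3) :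
    3 ^ (k + 1) ∣ ((3 * n + d) - (3 * m + d)) * (3 * n + d).choose (3 * m + d) ↔
      3 ^ k ∣ (n - m) * n.choose m := by
  rw [show (3 * n + d) - (3 * m + d) = 3 * (n - m) by omega, mul_assoc, three_mul']
  by_cases hm : m ≤ n
  · obtain ⟨r, rfl⟩ := Nat.exists_eq_add_of_le hm
    obtain ⟨u1, h1, e1⟩ := fact_unit m d (by omega)
    obtain ⟨u2, h2, e2⟩ := fact_unit r 0 (by omega)
    obtain ⟨u3, h3, e3⟩ := fact_unit (m + r) d (by omega)
    have hc := acm m r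
    have hc' := acm (3 * m + d) (3 * r + 0)
    rw [show 3 * m + d + (3 * r + 0) = 3 * (m + r) + d by ring, e1, e2, e3, ← hc] at hc'
    refine dvd_of_unit k (Nat.Coprime.mul_right h1 h2) h3 ?_
    rw [mul_assoc, mul_assoc]
    congr 1
    have hp : 0 < 3 ^ (m + r) * (m.factorial * r.factorial) := by positivity
    apply Nat.eq_of_mul_eq_mul_left hp
    rw [pow_add] at *
    linarith
  · rw [Nat.sub_eq_zero_of_le (by omega)]; simp

lemma bch_gt (n m d e k : ℕ) (hd : e < 3) (he : d < e) :
    3 ^ (k + 1) ∣ ((3 * n + d) - (3 * m + e)) * (3 * n + d).choose (3 * m + e) ↔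
      3 ^ k ∣ (n - m) * n.choose m := by
  by_cases hm : m < n
  · rw [show (3 * n + d) - (3 * m + e) = 3 * (n - m - 1) + (3 + d - e) by omega,
      unit_mul (k + 1) (cop _ _ (by omega)), choose_gt n m d e k hd he]
  · rw [Nat.choose_eq_zero_of_lt (by omega), Nat.sub_eq_zero_of_le (show n ≤ m by omega)]; simp

def A (k n : ℕ) : ℕ := ∑ m ∈ Finset.range (n + 1), if 3 ^ k ∣ n.choose m then 0 else 1
def B (k n : ℕ) : ℕ := ∑ m ∈ Finset.range (n + 1), if 3 ^ k ∣ (n - m) * n.choose m then 0 else 1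

lemma A_ext (k n N : ℕ) (h : n + 1 ≤ N) :
    A k n = ∑ m ∈ Finset.range N, if 3 ^ k ∣ n.choose m then 0 else 1 := by
  refine Finset.sum_subset (Finset.range_mono h) fun m _ hm => ?_
  rw [Finset.mem_range] at hm
  rw [Nat.choose_eq_zero_of_lt (by omega)]; simp

lemma B_ext (k n N : ℕ) (h : n + 1 ≤ N) :
    B k n = ∑ m ∈ Finset.range N, if 3 ^ k ∣ (n - m) * n.choose m then 0 else 1 := by
  refine Finset.sum_subset (Finset.range_mono h) fun m _ hm => ?_
  rw [Finset.mem_range] at hm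
  rw [Nat.choose_eq_zero_of_lt (by omega)]; simp

lemma sum3 (f : ℕ → ℕ) (M : ℕ) : ∑ m ∈ Finset.range (3 * M), f m =
    ∑ m ∈ Finset.range M, (f (3 * m + 0) + f (3 * m + 1) + f (3 * m + 2)) := by
  induction M with
  | zero => simp
  | succ M ih =>
    rw [show 3 * (M + 1) = 3 * M + 1 + 1 + 1 by ring, Finset.sum_range_succ,
      Finset.sum_range_succ, Finset.sum_range_succ, ih, Finset.sum_range_succ]
    simp only [add_zero]; ring

lemma A_rec (k n d : ℕ) (hd : d < 3) :
    A (k + 1) (3 * n + d) = (d + 1) * A (k + 1) n + (2 - d) * B k n := by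
  rw [A_ext _ (3 * n + d) (3 * (n + 1)) (by omega), sum3, A, B, Finset.mul_sum, Finset.mul_sum,
    ← Finset.sum_add_distrib]
  refine Finset.sum_congr rfl fun m _ => ?_
  have h1 := fun e he => choose_le n m d e (k + 1) hd he
  have h2 := fun e h he => choose_gt n m d e k h he
  interval_cases d
  · rw [if_congr (h1 0 (by norm_num)) rfl rfl, if_congr (h2 1 (by norm_num) (by norm_num)) rfl rfl,
      if_congr (h2 2 (by norm_num) (by norm_num)) rfl rfl]; ring
  · rw [if_congr (h1 0 (by norm_num)) rfl rfl, if_congr (h1 1 (by norm_num)) rfl rfl,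
      if_congr (h2 2 (by norm_num) (by norm_num)) rfl rfl]; ring
  · rw [if_congr (h1 0 (by norm_num)) rfl rfl, if_congr (h1 1 (by norm_num)) rfl rfl,
      if_congr (h1 2 (by norm_num)) rfl rfl]; ring

lemma B_rec (k n d : ℕ) (hd : d < 3) :
    B (k + 1) (3 * n + d) = d * A (k + 1) n + (3 - d) * B k n := by
  rw [B_ext _ (3 * n + d) (3 * (n + 1)) (by omega), sum3, A, B, Finset.mul_sum, Finset.mul_sum,
    ← Finset.sum_add_distrib]
  refine Finset.sum_congr rfl fun m _ => ?_
  have h1 := fun e he => bch_lt n m d e (k + 1) hd he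
  have h0 := bch_eq n m d k hd
  have h2 := fun e h he => bch_gt n m d e k h he
  interval_cases d
  · rw [if_congr h0 rfl rfl, if_congr (h2 1 (by norm_num) (by norm_num)) rfl rfl,
      if_congr (h2 2 (by norm_num) (by norm_num)) rfl rfl]; ring
  · rw [if_congr (h1 0 (by norm_num)) rfl rfl, if_congr h0 rfl rfl,
      if_congr (h2 2 (by norm_num) (by norm_num)) rfl rfl]; ring
  · rw [if_congr (h1 0 (by norm_num)) rfl rfl, if_congr (h1 1 (by norm_num)) rfl rfl,
      if_congr h0 rfl rfl]; ring

lemma B_zero (n : ℕ) : B 0 n = 0 := by simp [B]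

lemma rowCount_eq (n : ℕ) : rowCount 27 n = A 3 n := by
  rw [rowCount, A, Finset.card_filter]
  refine Finset.sum_congr rfl fun m _ => ?_
  by_cases h : 27 ∣ n.choose m <;> simp [h]

lemma word_succ (n d : ℕ) (hd : d < 3) (h : 0 < 3 * n + d) :
    wordOf 3 (3 * n + d) = wordOf 3 n ++ [d] := by
  rw [wordOf, Nat.digits_def' (by norm_num) h, List.reverse_cons, wordOf]
  congr 3 <;> omega

lemma sc_succ (n d : ℕ) (hd : d < 3) (h : 0 < 3 * n + d) (w : List ℕ) (z : ℕ) :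
    subwordCount 3 (3 * n + d) (w ++ [z]) = subwordCount 3 n (w ++ [z]) +
      if d = z ∧ w <:+ wordOf 3 n then 1 else 0 := by
  unfold subwordCount
  rw [word_succ n d hd h]
  generalize wordOf 3 n = W
  simp only [List.length_append, List.length_singleton]
  by_cases hw : w.length ≤ W.length
  · obtain ⟨t, ht⟩ := Nat.exists_eq_add_of_le hw
    rw [show W.length + 1 + 1 - (w.length + 1) = t + 1 by omega,
      show W.length + 1 - (w.length + 1) = t by omega, Finset.card_filter, Finset.card_filter,
      Finset.sum_range_succ]
    congr 1
    · refine Finset.sum_congr rfl fun s hs => ?_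
      rw [Finset.mem_range] at hs
      rw [List.drop_append_of_le_length (by omega),
        List.take_append_of_le_length (by rw [List.length_drop]; omega)]
    · rw [List.drop_append_of_le_length (by omega), List.take_of_length_le (by simp; omega)]
      refine if_congr ?_ rfl rfl
      rw [List.suffix_iff_eq_drop, show W.length - w.length = t by omega]
      rw [List.append_singleton_inj]
      constructor <;> (rintro ⟨a, b⟩; exact ⟨b.symm ▸ rfl, a.symm ▸ rfl⟩)
  · rw [if_neg (fun hh => hw hh.2.length_le)]
    rw [show W.length + 1 + 1 - (w.length + 1) = 0 by omega,
      show W.length + 1 - (w.length + 1) = 0 by omega]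
    simp

lemma word_zero : wordOf 3 0 = [] := by simp [wordOf]

lemma suf1 (q r x : ℕ) (hr : r < 3) (hx : x ≠ 0) : [x] <:+ wordOf 3 (3 * q + r) ↔ r = x := by
  rcases Nat.eq_zero_or_pos (3 * q + r) with h | h
  · rw [h, word_zero]; simp; omega
  · rw [word_succ q r hr h, List.suffix_concat_iff]
    constructor
    · rintro (h | ⟨t, h, -⟩)
      · simp at h
      · rw [← List.nil_append [x]] at h
        exact (List.append_singleton_inj.1 h).2.symm
    · rintro rfl; exact Or.inr ⟨[], rfl, List.nil_suffix⟩

lemma suf2 (q r x y : ℕ) (hr : r < 3) (hx : x ≠ 0) :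
    [x, y] <:+ wordOf 3 (3 * q + r) ↔ r = y ∧ [x] <:+ wordOf 3 q := by
  rcases Nat.eq_zero_or_pos (3 * q + r) with h | h
  · rw [h, word_zero, show q = 0 by omega, word_zero]; simp
  · rw [word_succ q r hr h, List.suffix_concat_iff]
    constructor
    · rintro (h | ⟨t, h, h'⟩)
      · simp at h
      · rw [show [x, y] = [x] ++ [y] from rfl] at h
        obtain ⟨h1, h2⟩ := List.append_singleton_inj.1 h
        subst h1
        exact ⟨h2.symm, h'⟩
    · rintro ⟨rfl, h⟩; exact Or.inr ⟨[x], rfl, h⟩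

lemma sc1 (n d z : ℕ) (hd : d < 3) (hz : z ≠ 0) :
    subwordCount 3 (3 * n + d) [z] = subwordCount 3 n [z] + if d = z then 1 else 0 := by
  rcases Nat.eq_zero_or_pos (3 * n + d) with h | h
  · obtain ⟨rfl, rfl⟩ : n = 0 ∧ d = 0 := by omega
    simp [hz.symm]
  · simpa using sc_succ n d hd h [] z

lemma sc2 (n e d x z : ℕ) (hd : d < 3) (he : e < 3) (hx : x ≠ 0) :
    subwordCount 3 (3 * (3 * n + e) + d) [x, z] = subwordCount 3 (3 * n + e) [x, z] +
      if d = z ∧ e = x then 1 else 0 := by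
  rcases Nat.eq_zero_or_pos (3 * (3 * n + e) + d) with h | h
  · obtain ⟨rfl, rfl, rfl⟩ : n = 0 ∧ e = 0 ∧ d = 0 := by omega
    simp [hx.symm]
  · simpa [suf1 n e x he hx] using sc_succ (3 * n + e) d hd h [x] z

lemma sc3 (n f e d x y z : ℕ) (hd : d < 3) (he : e < 3) (hf : f < 3) (hx : x ≠ 0) :
    subwordCount 3 (3 * (3 * (3 * n + f) + e) + d) [x, y, z] =
      subwordCount 3 (3 * (3 * n + f) + e) [x, y, z] +
      if d = z ∧ e = y ∧ f = x then 1 else 0 := by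
  rcases Nat.eq_zero_or_pos (3 * (3 * (3 * n + f) + e) + d) with h | h
  · obtain ⟨rfl, rfl, rfl, rfl⟩ : n = 0 ∧ f = 0 ∧ e = 0 ∧ d = 0 := by omega
    simp [hx.symm]
  · simpa [suf2 _ e x y he hx, suf1 n f x hf hx] using sc_succ (3 * (3 * n + f) + e) d hd h [x, y] z

lemma ind (P : ℕ → Prop) (h0 : P 0) (h : ∀ n d, d < 3 → P n → P (3 * n + d)) (n : ℕ) : P n := by
  induction n using Nat.strong_induction_on with
  | _ n ih =>
    rcases Nat.eq_zero_or_pos n with rfl | hn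
    · exact h0
    · have := h (n / 3) (n % 3) (Nat.mod_lt _ (by norm_num)) (ih _ (by omega))
      rwa [Nat.div_add_mod] at this

lemma A_at_zero (k : ℕ) : A (k + 1) 0 = 1 := by
  simp [A]

lemma sc_zero (w : List ℕ) (h : 0 < w.length) : subwordCount 3 0 w = 0 := by
  rw [subwordCount, word_zero]
  simp; rintro rfl; simp at h

lemma A1 (n : ℕ) : (A 1 n : ℚ) = 2 ^ subwordCount 3 n [1] * 3 ^ subwordCount 3 n [2] := by
  induction n using ind with
  | h0 => rw [A_at_zero, sc_zero _ (by simp), sc_zero _ (by simp)]; simp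
  | h n d hd ih =>
    rw [A_rec 0 n d hd, B_zero, sc1 n d 1 hd (by norm_num), sc1 n d 2 hd (by norm_num)]
    push_cast
    rw [ih]
    interval_cases d <;> norm_num <;> ring

lemma A2 (n : ℕ) : (A 2 n : ℚ) = 2 ^ subwordCount 3 n [1] * 3 ^ subwordCount 3 n [2] *
    (1 + subwordCount 3 n [1, 0] + (1 / 4) * subwordCount 3 n [1, 1] +
      (4 / 3) * subwordCount 3 n [2, 0] + (1 / 3) * subwordCount 3 n [2, 1]) := by
  induction n using ind with
  | h0 => rw [A_at_zero]; simp [sc_zero]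
  | h k d hd ih =>
    obtain ⟨j, e, he, rfl⟩ : ∃ j e, e < 3 ∧ k = 3 * j + e := ⟨k / 3, k % 3, by omega, by omega⟩
    have hA := A_rec 1 (3 * j + e) d hd
    have hB := B_rec 0 j e he
    rw [B_zero] at hB
    have hA1 := A1 j
    rw [hA, hB]
    simp only [Nat.cast_add, Nat.cast_mul, ih, hA1, zero_add]
    simp only [sc2 j e d _ _ hd he one_ne_zero, sc2 j e d _ _ hd he two_ne_zero,
      sc1 _ d _ hd one_ne_zero, sc1 _ d _ hd two_ne_zero,
      sc1 _ e _ he one_ne_zero, sc1 _ e _ he two_ne_zero]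
    clear hA hB hA1 ih
    interval_cases d <;> interval_cases e <;> norm_num <;> ring

end S17

set_option maxHeartbeats 4000000 in
/-- For every `n ≥ 0`, as an identity in the rational numbers, the formula for `a_{27}(n)` in
terms of base-3 subword counts. -/
theorem stmt17 (n : ℕ) :
    (rowCount 27 n : ℚ) =
      2 ^ subwordCount 3 n [1] * 3 ^ subwordCount 3 n [2] *
        (1 + (1 / 2) * (subwordCount 3 n [1, 0] : ℚ) + (7 / 32) * (subwordCount 3 n [1, 1] : ℚ) +
          (4 / 9) * (subwordCount 3 n [2, 0] : ℚ) + (5 / 18) * (subwordCount 3 n [2, 1] : ℚ) +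
          3 * (subwordCount 3 n [1, 0, 0] : ℚ) + (3 / 4) * (subwordCount 3 n [1, 0, 1] : ℚ) +
          (3 / 4) * (subwordCount 3 n [1, 1, 0] : ℚ) + (3 / 16) * (subwordCount 3 n [1, 1, 1] : ℚ) +
          (1 / 3) * (subwordCount 3 n [1, 2, 0] : ℚ) + (1 / 12) * (subwordCount 3 n [1, 2, 1] : ℚ) +
          4 * (subwordCount 3 n [2, 0, 0] : ℚ) + (subwordCount 3 n [2, 0, 1] : ℚ) +
          (subwordCount 3 n [2, 1, 0] : ℚ) + (1 / 4) * (subwordCount 3 n [2, 1, 1] : ℚ) +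
          (4 / 9) * (subwordCount 3 n [2, 2, 0] : ℚ) + (1 / 9) * (subwordCount 3 n [2, 2, 1] : ℚ) +
          (1 / 2) * (subwordCount 3 n [1, 0] : ℚ) ^ 2 +
          (1 / 4) * (subwordCount 3 n [1, 0] : ℚ) * (subwordCount 3 n [1, 1] : ℚ) +
          (4 / 3) * (subwordCount 3 n [1, 0] : ℚ) * (subwordCount 3 n [2, 0] : ℚ) +
          (1 / 3) * (subwordCount 3 n [1, 0] : ℚ) * (subwordCount 3 n [2, 1] : ℚ) +
          (1 / 32) * (subwordCount 3 n [1, 1] : ℚ) ^ 2 +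
          (1 / 3) * (subwordCount 3 n [1, 1] : ℚ) * (subwordCount 3 n [2, 0] : ℚ) +
          (1 / 12) * (subwordCount 3 n [1, 1] : ℚ) * (subwordCount 3 n [2, 1] : ℚ) +
          (8 / 9) * (subwordCount 3 n [2, 0] : ℚ) ^ 2 +
          (4 / 9) * (subwordCount 3 n [2, 0] : ℚ) * (subwordCount 3 n [2, 1] : ℚ) +
          (1 / 18) * (subwordCount 3 n [2, 1] : ℚ) ^ 2) := by
  rw [S17.rowCount_eq]
  induction n using S17.ind with
  | h0 => rw [S17.A_at_zero]; simp [S17.sc_zero]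
  | h k d hd ih =>
    obtain ⟨i, f, e, hf, he, rfl⟩ : ∃ i f e, f < 3 ∧ e < 3 ∧ k = 3 * (3 * i + f) + e :=
      ⟨k / 9, k / 3 % 3, k % 3, by omega, by omega, by omega⟩
    have hA := S17.A_rec 2 (3 * (3 * i + f) + e) d hd
    have hB := S17.B_rec 1 (3 * i + f) e he
    have hB1 := S17.B_rec 0 i f hf
    rw [S17.B_zero] at hB1
    have hA1 := S17.A1 i
    have hA2 := S17.A2 (3 * i + f)
    rw [hA, hB, hB1]
    simp only [Nat.cast_add, Nat.cast_mul, ih, hA1, hA2, zero_add, Nat.reduceAdd]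
    clear hA hB hB1 hA1 hA2 ih
    simp only [S17.sc3 i f e d _ _ _ hd he hf one_ne_zero,
      S17.sc3 i f e d _ _ _ hd he hf two_ne_zero,
      S17.sc2 _ e d _ _ hd he one_ne_zero, S17.sc2 _ e d _ _ hd he two_ne_zero,
      S17.sc2 i f e _ _ he hf one_ne_zero, S17.sc2 i f e _ _ he hf two_ne_zero,
      S17.sc1 _ d _ hd one_ne_zero, S17.sc1 _ d _ hd two_ne_zero,
      S17.sc1 _ e _ he one_ne_zero, S17.sc1 _ e _ he two_ne_zero,
      S17.sc1 _ f _ hf one_ne_zero, S17.sc1 _ f _ hf two_ne_zero]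
    interval_cases d <;> interval_cases e <;> interval_cases f <;> norm_num <;> ring
end

section
/- For every n ≥ 0, the number of nonzero entries on row n of Pascal's triangle modulo 16 satisfies, as an identity in the rational numbers, a_{16}(n) = 2^{|n|_1} · (1 + (5/12)|n|_{10} + (1/2)|n|_{100} + (1/8)|n|_{110} + 2|n|_{1000} + (1/2)|n|_{1010} + (1/2)|n|_{1100} + (1/8)|n|_{1110} + (1/16)|n|_{10}^2 + (1/2)|n|_{10}|n|_{100} + (1/8)|n|_{10}|n|_{110} + (1/48)|n|_{10}^3), where subword counts are taken in the base-2 representation of n. -/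
def cntW (W w : List ℕ) : ℕ :=
  ((Finset.range (W.length + 1 - w.length)).filter fun s => (W.drop s).take w.length = w).card

lemma cntW_append (W u : List ℕ) (d e : ℕ) :
    cntW (W ++ [d]) (u ++ [e]) = cntW W (u ++ [e]) + if d = e ∧ u <:+ W then 1 else 0 := by
  unfold cntW
  by_cases h : u.length ≤ W.length
  · have h1 : (W ++ [d]).length + 1 - (u ++ [e]).length = (W.length - u.length) + 1 := by
      simp; omega
    have h2 : W.length + 1 - (u ++ [e]).length = W.length - u.length := by
      simp
    rw [h1, h2, Finset.range_add_one, Finset.filter_insert]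
    have h3 : (List.take (u ++ [e]).length (List.drop (W.length - u.length) (W ++ [d])) = u ++ [e])
        ↔ (d = e ∧ u <:+ W) := by
      rw [List.drop_append_of_le_length (by omega), List.take_of_length_le (by simp; omega)]
      rw [List.suffix_iff_eq_drop]
      constructor
      · intro hh
        have := List.append_inj' hh rfl
        exact ⟨by simpa using this.2, this.1.symm⟩
      · rintro ⟨rfl, hh⟩
        rw [← hh]
    have h4 : (Finset.range (W.length - u.length)).filter
          (fun s => ((W ++ [d]).drop s).take (u ++ [e]).length = u ++ [e])
        = (Finset.range (W.length - u.length)).filter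
          (fun s => (W.drop s).take (u ++ [e]).length = u ++ [e]) := by
      apply Finset.filter_congr
      intro s hs
      rw [Finset.mem_range] at hs
      rw [List.drop_append_of_le_length (by omega), List.take_append_of_le_length (by simp; omega)]
    rw [h4]
    by_cases hc : d = e ∧ u <:+ W
    · rw [if_pos (h3.2 hc), if_pos hc, Finset.card_insert_of_notMem (by simp)]
    · rw [if_neg (fun x => hc (h3.1 x)), if_neg hc]; rfl
  · have h1 : (W ++ [d]).length + 1 - (u ++ [e]).length = 0 := by
      simp; omega
    have h2 : W.length + 1 - (u ++ [e]).length = 0 := by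
      simp; omega
    rw [h1, h2, if_neg]
    · simp
    · rintro ⟨_, hh⟩
      exact h hh.length_le

lemma wordOf_step (n d : ℕ) (hd : d < 2) (h : 0 < n ∨ 0 < d) :
    wordOf 2 (2 * n + d) = wordOf 2 n ++ [d] := by
  unfold wordOf
  rw [show 2 * n + d = d + 2 * n by ring, Nat.digits_add 2 (by norm_num) d n hd (by omega)]
  simp

lemma sc_step (n d : ℕ) (u : List ℕ) (e : ℕ) (hd : d < 2) (h : 0 < n ∨ 0 < d) :
    subwordCount 2 (2 * n + d) (u ++ [e]) =
      subwordCount 2 n (u ++ [e]) + if d = e ∧ u <:+ wordOf 2 n then 1 else 0 := by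
  have := cntW_append (wordOf 2 n) u d e
  rw [← wordOf_step n d hd h] at this
  exact this

lemma suf_snoc (W u : List ℕ) (d e : ℕ) : (u ++ [e] <:+ W ++ [d]) ↔ (e = d ∧ u <:+ W) := by
  constructor
  · rintro ⟨t, ht⟩
    rw [← List.append_assoc] at ht
    have := List.append_inj' ht rfl
    exact ⟨by simpa using this.2, ⟨t, this.1⟩⟩
  · rintro ⟨rfl, t, ht⟩
    exact ⟨t, by rw [← ht]; simp⟩

lemma suf_step (n e : ℕ) (u : List ℕ) :
    (u ++ [e] <:+ wordOf 2 n) ↔ (0 < n ∧ e = n % 2 ∧ u <:+ wordOf 2 (n / 2)) := by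
  rcases Nat.eq_zero_or_pos n with rfl | hn
  · simp [wordOf]
  · have : wordOf 2 n = wordOf 2 (n / 2) ++ [n % 2] := by
      have := wordOf_step (n / 2) (n % 2) (by omega) (by omega)
      rwa [Nat.div_add_mod] at this
    rw [this, suf_snoc]
    simp [hn]

lemma suf1 (n : ℕ) : ([1] <:+ wordOf 2 n) ↔ n % 2 = 1 := by
  rw [show [1] = [] ++ [1] from rfl, suf_step]; simp; omega
lemma suf2 (n a : ℕ) (ha : a < 2) : ([1, a] <:+ wordOf 2 n) ↔ n % 4 = 2 + a := by
  rw [show [1, a] = [1] ++ [a] from rfl, suf_step, suf1]; omega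
lemma suf3 (n a b : ℕ) (ha : a < 2) (hb : b < 2) :
    ([1, a, b] <:+ wordOf 2 n) ↔ n % 8 = 4 + 2 * a + b := by
  rw [show [1, a, b] = [1, a] ++ [b] from rfl, suf_step, suf2 _ _ ha]; omega

lemma sc_odd (n : ℕ) (u : List ℕ) :
    subwordCount 2 (2 * n + 1) (u ++ [0]) = subwordCount 2 n (u ++ [0]) := by
  rw [sc_step n 1 u 0 (by norm_num) (by omega)]; simp

lemma sc_even (n : ℕ) (u : List ℕ) (hu : u ≠ []) :
    subwordCount 2 (2 * n) (u ++ [0]) =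
      subwordCount 2 n (u ++ [0]) + if u <:+ wordOf 2 n then 1 else 0 := by
  rcases Nat.eq_zero_or_pos n with rfl | hn
  · simp [wordOf, hu]
  · have := sc_step n 0 u 0 (by norm_num) (by omega)
    simpa using this

lemma c1_odd (n : ℕ) : subwordCount 2 (2 * n + 1) [1] = subwordCount 2 n [1] + 1 := by
  have := sc_step n 1 [] 1 (by norm_num) (by omega)
  simpa using this
lemma c1_even (n : ℕ) : subwordCount 2 (2 * n) [1] = subwordCount 2 n [1] := by
  rcases Nat.eq_zero_or_pos n with rfl | hn
  · simp
  · have := sc_step n 0 [] 1 (by norm_num) (by omega)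
    simpa using this

lemma c10_even (n : ℕ) : subwordCount 2 (2 * n) [1, 0] =
    subwordCount 2 n [1, 0] + if n % 2 = 1 then 1 else 0 := by
  have := sc_even n [1] (by simp)
  simpa only [suf1, List.cons_append, List.nil_append] using this
lemma c1a0_even (n a : ℕ) (ha : a < 2) : subwordCount 2 (2 * n) [1, a, 0] =
    subwordCount 2 n [1, a, 0] + if n % 4 = 2 + a then 1 else 0 := by
  have := sc_even n [1, a] (by simp)
  simpa only [suf2 n a ha, List.cons_append, List.nil_append] using this
lemma c1ab0_even (n a b : ℕ) (ha : a < 2) (hb : b < 2) : subwordCount 2 (2 * n) [1, a, b, 0] =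
    subwordCount 2 n [1, a, b, 0] + if n % 8 = 4 + 2 * a + b then 1 else 0 := by
  have := sc_even n [1, a, b] (by simp)
  simpa only [suf3 n a b ha hb, List.cons_append, List.nil_append] using this
lemma c10_odd (n : ℕ) : subwordCount 2 (2 * n + 1) [1, 0] = subwordCount 2 n [1, 0] :=
  sc_odd n [1]
lemma c1a0_odd (n a : ℕ) : subwordCount 2 (2 * n + 1) [1, a, 0] = subwordCount 2 n [1, a, 0] :=
  sc_odd n [1, a]
lemma c1ab0_odd (n a b : ℕ) :
    subwordCount 2 (2 * n + 1) [1, a, b, 0] = subwordCount 2 n [1, a, b, 0] :=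
  sc_odd n [1, a, b]

/-- row counts -/
def tt (n j : ℕ) : ℕ := ((Finset.range (n + 1)).filter fun m => ¬ 2 ^ j ∣ n.choose m).card
def ss (n j : ℕ) : ℕ := ((Finset.range n).filter fun m => ¬ 2 ^ j ∣ n * (n - 1).choose m).card

lemma card_filter_range_two_mul (p : ℕ → Prop) [DecidablePred p] (n : ℕ) :
    ((Finset.range (2 * n)).filter p).card =
      ((Finset.range n).filter fun k => p (2 * k)).card +
      ((Finset.range n).filter fun k => p (2 * k + 1)).card := by
  induction n with
  | zero => simp
  | succ n ih =>
    rw [show 2 * (n + 1) = 2 * n + 1 + 1 by ring]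
    simp only [Finset.card_filter, Finset.sum_range_succ] at *
    rw [ih]; ring

lemma dvd_odd_mul (j a b c : ℕ) (ha : a % 2 = 1) (h : a * b = c) : 2 ^ j ∣ b ↔ 2 ^ j ∣ c := by
  rw [← h]
  have : Nat.Coprime (2 ^ j) a := by
    apply Nat.Coprime.pow_left
    rw [Nat.coprime_two_left, Nat.odd_iff]; exact ha
  exact (this.dvd_mul_left).symm

lemma two_choose_odd (n k : ℕ) : (2 * k + 1) * (2 * n).choose (2 * k + 1)
    = 2 * n * (2 * n - 1).choose (2 * k) := by
  rcases n with _ | n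
  · simp
  · have := Nat.add_one_mul_choose_eq (2 * n + 1) (2 * k)
    rw [show 2 * (n + 1) - 1 = 2 * n + 1 by omega, show 2 * (n + 1) = 2 * n + 1 + 1 by ring, this]
    ring

lemma dvd_even (j : ℕ) : ∀ n k : ℕ, 2 ^ j ∣ (2 * n).choose (2 * k) ↔ 2 ^ j ∣ n.choose k := by
  have key : ∀ n k : ℕ, ∃ a b : ℕ, a % 2 = 1 ∧ b % 2 = 1 ∧
      a * (2 * n).choose (2 * k) = b * n.choose k := by
    intro n
    induction n with
    | zero =>
      intro k
      rcases k with _ | k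
      · exact ⟨1, 1, rfl, rfl, by simp⟩
      · exact ⟨1, 1, rfl, rfl, by simp [Nat.mul_add]⟩
    | succ n ih =>
      intro k
      rcases k with _ | k
      · exact ⟨1, 1, rfl, rfl, by simp⟩
      · obtain ⟨a, b, ha, hb, h⟩ := ih k
        refine ⟨a * (2 * k + 1), b * (2 * n + 1), ?_, ?_, ?_⟩
        · rw [Nat.mul_mod, ha]; omega
        · rw [Nat.mul_mod, hb]; omega
        have e1 := Nat.add_one_mul_choose_eq (2 * n + 1) (2 * k + 1)
        have e2 := Nat.add_one_mul_choose_eq (2 * n) (2 * k)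
        have e3 := Nat.add_one_mul_choose_eq n k
        apply Nat.eq_of_mul_eq_mul_right (show 0 < 2 * k + 2 by omega)
        calc a * (2 * k + 1) * (2 * (n + 1)).choose (2 * (k + 1)) * (2 * k + 2)
            = a * (2 * k + 1) * ((2 * n + 1 + 1).choose (2 * k + 1 + 1) * (2 * k + 1 + 1)) := by
              ring_nf
          _ = a * (2 * n + 2) * ((2 * n + 1).choose (2 * k + 1) * (2 * k + 1)) := by
              rw [← e1]; ring
          _ = (2 * n + 2) * (2 * n + 1) * (a * (2 * n).choose (2 * k)) := by rw [← e2]; ring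
          _ = 2 * (2 * n + 1) * b * ((n + 1) * n.choose k) := by rw [h]; ring
          _ = _ := by rw [e3]; ring
  intro n k
  obtain ⟨a, b, ha, hb, h⟩ := key n k
  rw [dvd_odd_mul j a _ _ ha h, ← dvd_odd_mul j b _ _ hb rfl]

lemma dvd_odd_even (j n k : ℕ) : 2 ^ j ∣ (2 * n + 1).choose (2 * k) ↔ 2 ^ j ∣ n.choose k := by
  by_cases hk : k ≤ n
  · rw [← dvd_even j n k]
    have := Nat.choose_mul_succ_eq (2 * n) (2 * k)
    rw [dvd_odd_mul j (2 * n + 1) ((2 * n).choose (2 * k)) _ (by omega) rfl]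
    exact dvd_odd_mul j (2 * n + 1 - 2 * k) _ _ (by omega) (by linarith)
  · rw [Nat.choose_eq_zero_of_lt (by omega), Nat.choose_eq_zero_of_lt (by omega)]

lemma dvd_odd_odd (j n k : ℕ) : 2 ^ j ∣ (2 * n + 1).choose (2 * k + 1) ↔ 2 ^ j ∣ n.choose k := by
  rw [← dvd_even j n k]
  have := Nat.add_one_mul_choose_eq (2 * n) (2 * k)
  rw [dvd_odd_mul j (2 * n + 1) ((2 * n).choose (2 * k)) _ (by omega) rfl]
  exact dvd_odd_mul j (2 * k + 1) _ _ (by omega) (by linarith)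

lemma tt_odd (n j : ℕ) : tt (2 * n + 1) j = 2 * tt n j := by
  unfold tt
  rw [show 2 * n + 1 + 1 = 2 * (n + 1) by ring, card_filter_range_two_mul]
  simp only [dvd_odd_even, dvd_odd_odd]
  ring

lemma dvd_pred (j n k : ℕ) (hk : k < n) :
    2 ^ j ∣ n * (2 * n - 1).choose (2 * k) ↔ 2 ^ j ∣ n * (n - 1).choose k := by
  obtain ⟨n, rfl⟩ : ∃ m, n = m + 1 := ⟨n - 1, by omega⟩
  rw [show 2 * (n + 1) - 1 = 2 * n + 1 by omega, show n + 1 - 1 = n by omega]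
  -- transfer through all powers
  have key : ∀ x y c : ℕ, 0 < x → 0 < y → 0 < c → (∀ i, 2 ^ i ∣ x ↔ 2 ^ i ∣ y) →
      (2 ^ j ∣ c * x ↔ 2 ^ j ∣ c * y) := by
    intro x y c hx hy hc h
    have hv : padicValNat 2 x = padicValNat 2 y := by
      apply le_antisymm
      · rw [← padicValNat_dvd_iff_le hy.ne', ← h]; exact pow_padicValNat_dvd
      · rw [← padicValNat_dvd_iff_le hx.ne', h]; exact pow_padicValNat_dvd
    rw [padicValNat_dvd_iff_le (by positivity), padicValNat_dvd_iff_le (by positivity),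
      padicValNat.mul hc.ne' hx.ne', padicValNat.mul hc.ne' hy.ne', hv]
  exact key _ _ _ (Nat.choose_pos (by omega)) (Nat.choose_pos (by omega)) (by omega)
    (fun i => dvd_odd_even i n k)

lemma tt_even (n j : ℕ) : tt (2 * n) (j + 1) = tt n (j + 1) + ss n j := by
  unfold tt ss
  have h0 : ((Finset.range (2 * n + 1)).filter fun m => ¬ 2 ^ (j + 1) ∣ (2 * n).choose m).card
      = ((Finset.range (2 * (n + 1))).filter fun m => ¬ 2 ^ (j + 1) ∣ (2 * n).choose m).card := by
    rw [show 2 * (n + 1) = 2 * n + 1 + 1 by ring, Finset.range_add_one (n := 2 * n + 1),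
      Finset.filter_insert, if_neg (by simp)]
  rw [h0, card_filter_range_two_mul]
  simp only [dvd_even]
  congr 1
  rw [Finset.range_add_one, Finset.filter_insert, if_neg (by simp)]
  congr 1
  apply Finset.filter_congr
  intro k hk
  rw [Finset.mem_range] at hk
  rw [dvd_odd_mul (j + 1) (2 * k + 1) _ _ (by omega) (two_choose_odd n k), pow_succ',
    mul_assoc, Nat.mul_dvd_mul_iff_left (by norm_num), dvd_pred j n k hk]

lemma ss_odd (n j : ℕ) : ss (2 * n + 1) j = tt (2 * n) j := by
  unfold ss tt
  congr 1
  apply Finset.filter_congr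
  intro k hk
  rw [show 2 * n + 1 - 1 = 2 * n by omega, ← dvd_odd_mul j _ _ _ (by omega) rfl]

lemma ss_even (n j : ℕ) : ss (2 * n) (j + 1) = 2 * ss n j := by
  unfold ss
  rw [card_filter_range_two_mul, two_mul (Finset.card _)]
  congr 2
  · apply Finset.filter_congr
    intro k hk
    rw [Finset.mem_range] at hk
    rw [pow_succ', mul_assoc, Nat.mul_dvd_mul_iff_left (by norm_num), dvd_pred j n k hk]
  · apply Finset.filter_congr
    intro k hk
    rw [Finset.mem_range] at hk
    rw [pow_succ', mul_assoc, Nat.mul_dvd_mul_iff_left (by norm_num), ← dvd_pred j n k hk]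
    have e := Nat.add_one_mul_choose_eq (2 * n - 1) (2 * k)
    have : (2 * n - 1).choose (2 * k + 1) * (2 * k + 1) =
        (2 * n - 1).choose (2 * k) * (2 * n - 1 - 2 * k) := Nat.choose_succ_right_eq _ _
    rw [dvd_odd_mul j (2 * k + 1) (n * (2 * n - 1).choose (2 * k + 1))
        (n * (2 * n - 1).choose (2 * k) * (2 * n - 1 - 2 * k)) (by omega)
        (by rw [mul_assoc n, ← this]; ring), mul_comm,
        ← dvd_odd_mul j _ _ _ (by omega) rfl]

lemma ss_zero (n : ℕ) : ss n 0 = 0 := by simp [ss]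

lemma tt_base (j : ℕ) : tt 0 (j + 1) = 1 := by
  unfold tt
  rw [Finset.filter_true_of_mem]
  · simp
  · intro x hx
    obtain rfl : x = 0 := by simpa using hx
    simp

lemma F1 (n : ℕ) : (tt n 1 : ℚ) = 2 ^ subwordCount 2 n [1] := by
  induction n using Nat.strong_induction_on with
  | _ n ih =>
  rcases Nat.even_or_odd' n with ⟨k, rfl | rfl⟩
  · rcases Nat.eq_zero_or_pos k with rfl | hk
    · simp [tt_base 0, tt_base 1, tt_base 2, tt_base 3, subwordCount, wordOf]
    rw [tt_even, ss_zero, c1_even, ← ih k (by omega)]; simp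
  · rw [tt_odd, c1_odd]
    push_cast
    rw [ih k (by omega)]; ring

lemma F2 (n : ℕ) : (tt n 2 : ℚ) = 2 ^ subwordCount 2 n [1] *
    (1 + 1 / 2 * (subwordCount 2 n [1, 0] : ℚ)) := by
  induction n using Nat.strong_induction_on with
  | _ n ih =>
  rcases Nat.even_or_odd' n with ⟨k, rfl | rfl⟩
  · rcases Nat.eq_zero_or_pos k with rfl | hk
    · simp [tt_base 0, tt_base 1, tt_base 2, tt_base 3, subwordCount, wordOf]
    rw [tt_even]
    push_cast
    rw [ih k (by omega)]
    rcases Nat.even_or_odd' k with ⟨l, rfl | rfl⟩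
    · rw [ss_even, ss_zero]
      simp only [c1_even, c10_even]
      simp
    · rw [ss_odd, F1]
      simp only [c1_even, c10_even, c1_odd, c10_odd]
      rw [if_pos (by omega)]
      push_cast; ring
  · rw [tt_odd, c1_odd, c10_odd]
    push_cast
    rw [ih k (by omega)]; ring

lemma F3 (n : ℕ) : (tt n 3 : ℚ) = 2 ^ subwordCount 2 n [1] *
    (1 + 3 / 8 * (subwordCount 2 n [1, 0] : ℚ) + (subwordCount 2 n [1, 0, 0] : ℚ)
      + 1 / 4 * (subwordCount 2 n [1, 1, 0] : ℚ) + 1 / 8 * (subwordCount 2 n [1, 0] : ℚ) ^ 2) := by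
  induction n using Nat.strong_induction_on with
  | _ n ih =>
  rcases Nat.even_or_odd' n with ⟨k, rfl | rfl⟩
  · rcases Nat.eq_zero_or_pos k with rfl | hk
    · simp [tt_base 0, tt_base 1, tt_base 2, tt_base 3, subwordCount, wordOf]
    rw [tt_even]
    push_cast
    rw [ih k (by omega)]
    rcases Nat.even_or_odd' k with ⟨l, rfl | rfl⟩
    · rw [ss_even]
      rcases Nat.even_or_odd' l with ⟨p, rfl | rfl⟩
      · rw [ss_even, ss_zero]
        simp only [c1_even, c10_even, c1a0_even _ 0 (by norm_num), c1a0_even _ 1 (by norm_num)]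
        simp (disch := omega) only [if_neg]
        push_cast; ring
      · rw [ss_odd]
        push_cast
        rw [F1]
        simp only [c1_even, c10_even, c1a0_even _ 0 (by norm_num), c1a0_even _ 1 (by norm_num),
          c1_odd, c10_odd, c1a0_odd]
        simp (disch := omega) only [if_neg, if_pos]
        push_cast; ring
    · rw [ss_odd, F2]
      simp only [c1_even, c10_even, c1a0_even _ 0 (by norm_num), c1a0_even _ 1 (by norm_num),
          c1_odd, c10_odd, c1a0_odd]
      rcases Nat.even_or_odd' l with ⟨p, rfl | rfl⟩ <;>
      · simp (disch := omega) only [if_neg, if_pos]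
        push_cast; ring
  · rw [tt_odd, c1_odd, c10_odd, c1a0_odd, c1a0_odd]
    push_cast
    rw [ih k (by omega)]; ring

lemma F4 (n : ℕ) :
    (tt n 4 : ℚ) =
      2 ^ subwordCount 2 n [1] *
        (1 + (5 / 12) * (subwordCount 2 n [1, 0] : ℚ) +
          (1 / 2) * (subwordCount 2 n [1, 0, 0] : ℚ) +
          (1 / 8) * (subwordCount 2 n [1, 1, 0] : ℚ) +
          2 * (subwordCount 2 n [1, 0, 0, 0] : ℚ) +
          (1 / 2) * (subwordCount 2 n [1, 0, 1, 0] : ℚ) +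
          (1 / 2) * (subwordCount 2 n [1, 1, 0, 0] : ℚ) +
          (1 / 8) * (subwordCount 2 n [1, 1, 1, 0] : ℚ) +
          (1 / 16) * (subwordCount 2 n [1, 0] : ℚ) ^ 2 +
          (1 / 2) * (subwordCount 2 n [1, 0] : ℚ) * (subwordCount 2 n [1, 0, 0] : ℚ) +
          (1 / 8) * (subwordCount 2 n [1, 0] : ℚ) * (subwordCount 2 n [1, 1, 0] : ℚ) +
          (1 / 48) * (subwordCount 2 n [1, 0] : ℚ) ^ 3) := by
  induction n using Nat.strong_induction_on with
  | _ n ih =>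
  rcases Nat.even_or_odd' n with ⟨k, rfl | rfl⟩
  · rcases Nat.eq_zero_or_pos k with rfl | hk
    · simp [tt_base 0, tt_base 1, tt_base 2, tt_base 3, subwordCount, wordOf]
    rw [tt_even]
    push_cast
    rw [ih k (by omega)]
    rcases Nat.even_or_odd' k with ⟨l, rfl | rfl⟩
    · rw [ss_even]
      rcases Nat.even_or_odd' l with ⟨p, rfl | rfl⟩
      · rw [ss_even]
        rcases Nat.even_or_odd' p with ⟨q, rfl | rfl⟩
        · rw [ss_even, ss_zero]
          simp only [
            c1_even, c10_even, c1a0_even _ 0 (by norm_num), c1a0_even _ 1 (by norm_num),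
            c1ab0_even _ 0 0 (by norm_num) (by norm_num),
            c1ab0_even _ 0 1 (by norm_num) (by norm_num),
            c1ab0_even _ 1 0 (by norm_num) (by norm_num),
            c1ab0_even _ 1 1 (by norm_num) (by norm_num), c1_odd, c10_odd, c1a0_odd, c1ab0_odd]
          simp (disch := omega) only [if_neg]
          push_cast; ring
        · rw [ss_odd]
          push_cast
          rw [F1]
          simp only [
            c1_even, c10_even, c1a0_even _ 0 (by norm_num), c1a0_even _ 1 (by norm_num),
            c1ab0_even _ 0 0 (by norm_num) (by norm_num),
            c1ab0_even _ 0 1 (by norm_num) (by norm_num),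
            c1ab0_even _ 1 0 (by norm_num) (by norm_num),
            c1ab0_even _ 1 1 (by norm_num) (by norm_num), c1_odd, c10_odd, c1a0_odd, c1ab0_odd]
          simp (disch := omega) only [if_neg, if_pos]
          push_cast; ring
      · rw [ss_odd]
        push_cast
        rw [F2]
        simp only [
            c1_even, c10_even, c1a0_even _ 0 (by norm_num), c1a0_even _ 1 (by norm_num),
            c1ab0_even _ 0 0 (by norm_num) (by norm_num),
            c1ab0_even _ 0 1 (by norm_num) (by norm_num),
            c1ab0_even _ 1 0 (by norm_num) (by norm_num),
            c1ab0_even _ 1 1 (by norm_num) (by norm_num), c1_odd, c10_odd, c1a0_odd, c1ab0_odd]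
        rcases Nat.even_or_odd' p with ⟨q, rfl | rfl⟩ <;>
        · simp (disch := omega) only [if_neg, if_pos]
          push_cast; ring
    · rw [ss_odd, F3]
      simp only [
            c1_even, c10_even, c1a0_even _ 0 (by norm_num), c1a0_even _ 1 (by norm_num),
            c1ab0_even _ 0 0 (by norm_num) (by norm_num),
            c1ab0_even _ 0 1 (by norm_num) (by norm_num),
            c1ab0_even _ 1 0 (by norm_num) (by norm_num),
            c1ab0_even _ 1 1 (by norm_num) (by norm_num), c1_odd, c10_odd, c1a0_odd, c1ab0_odd]
      have : l % 4 = 0 ∨ l % 4 = 1 ∨ l % 4 = 2 ∨ l % 4 = 3 := by omega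
      rcases this with h | h | h | h <;>
      · simp (disch := omega) only [if_neg, if_pos]
        push_cast; ring
  · simp only [tt_odd, c1_odd, c10_odd, c1a0_odd, c1ab0_odd]
    push_cast
    rw [ih k (by omega)]; ring

/-- For every `n ≥ 0`, as an identity in the rational numbers, the formula for `a_{16}(n)` in
terms of base-2 subword counts. -/
theorem stmt18 (n : ℕ) :
    (rowCount 16 n : ℚ) =
      2 ^ subwordCount 2 n [1] *
        (1 + (5 / 12) * (subwordCount 2 n [1, 0] : ℚ) +
          (1 / 2) * (subwordCount 2 n [1, 0, 0] : ℚ) +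
          (1 / 8) * (subwordCount 2 n [1, 1, 0] : ℚ) +
          2 * (subwordCount 2 n [1, 0, 0, 0] : ℚ) +
          (1 / 2) * (subwordCount 2 n [1, 0, 1, 0] : ℚ) +
          (1 / 2) * (subwordCount 2 n [1, 1, 0, 0] : ℚ) +
          (1 / 8) * (subwordCount 2 n [1, 1, 1, 0] : ℚ) +
          (1 / 16) * (subwordCount 2 n [1, 0] : ℚ) ^ 2 +
          (1 / 2) * (subwordCount 2 n [1, 0] : ℚ) * (subwordCount 2 n [1, 0, 0] : ℚ) +
          (1 / 8) * (subwordCount 2 n [1, 0] : ℚ) * (subwordCount 2 n [1, 1, 0] : ℚ) +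
          (1 / 48) * (subwordCount 2 n [1, 0] : ℚ) ^ 3) := by
  exact F4 n
end

section
/- Let p be a prime and let α ≥ 1. If m ≥ 0 and n ≥ 0 satisfy |m|_w = |n|_w for every nonempty word w of length at most α over the digit alphabet {0,1,…,p−1}, then a_{p^α}(m) · a_p(n) = a_{p^α}(n) · a_p(m); that is, the ratio a_{p^α}(n)/a_p(n) depends only on the numbers of occurrences of subwords of length at most α in the base-p representation of n. -/
open Polynomial

/-- generating polynomials (no borrow out, borrow out) -/
noncomputable def GH (p : ℕ) : List ℕ → ℤ[X] × ℤ[X]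
  | [] => (1, 0)
  | d :: W => (((d : ℤ[X]) + 1) * (GH p W).1 + (d : ℤ[X]) * (GH p W).2,
      X * (((p : ℤ[X]) - 1 - (d : ℤ[X])) * (GH p W).1 + ((p : ℤ[X]) - (d : ℤ[X])) * (GH p W).2))

theorem GH_det (p : ℕ) (U V : List ℕ) :
    (GH p (U ++ V)).2 * (GH p U).1 - (GH p U).2 * (GH p (U ++ V)).1
      = (X * (p : ℤ[X])) ^ U.length * (GH p V).2 := by
  induction U with
  | nil => simp [GH]
  | cons d U ih =>
    simp only [List.cons_append, GH, List.length_cons, pow_succ]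
    linear_combination (X * (p : ℤ[X])) * ih

theorem X_dvd_H (p : ℕ) (V : List ℕ) : (X : ℤ[X]) ∣ (GH p V).2 := by
  cases V with
  | nil => simp [GH]
  | cons d V => exact Dvd.intro _ rfl

theorem GH_key (p a : ℕ) (U V : List ℕ) :
    (X : ℤ[X]) ^ (U.length + 1) ∣
      (GH p (a :: (U ++ V))).1 * (GH p U).1 - (GH p (a :: U)).1 * (GH p (U ++ V)).1 := by
  have h : (GH p (a :: (U ++ V))).1 * (GH p U).1 - (GH p (a :: U)).1 * (GH p (U ++ V)).1
      = (a : ℤ[X]) * ((X * (p : ℤ[X])) ^ U.length * (GH p V).2) := by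
    rw [← GH_det]; simp only [GH]; ring
  rw [h, pow_succ, mul_pow]
  apply Dvd.dvd.mul_left
  exact mul_dvd_mul (Dvd.intro _ rfl) (X_dvd_H p V)

theorem GH_eval0 (p : ℕ) (W : List ℕ) : ¬ (X : ℤ[X]) ∣ (GH p W).1 := by
  rw [X_dvd_iff, coeff_zero_eq_eval_zero]
  have h2 : ∀ W, eval 0 (GH p W).2 = 0 := fun W => by
    rw [← coeff_zero_eq_eval_zero, ← X_dvd_iff]; exact X_dvd_H p W
  induction W with
  | nil => simp [GH]
  | cons d W ih =>
    simp only [GH, eval_add, eval_mul, h2, eval_natCast, eval_one, mul_zero, add_zero]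
    refine mul_ne_zero ?_ ih
    positivity

/-- multiset of windows -/
def wins (k : ℕ) (W : List ℕ) : Multiset (List ℕ) :=
  (Multiset.range (W.length + 1 - k)).map fun s => (W.drop s).take k

theorem wins_short (k : ℕ) (W : List ℕ) (h : W.length < k) : wins k W = 0 := by
  have : W.length + 1 - k = 0 := by omega
  simp [wins, this]

theorem wins_cons (k a : ℕ) (W : List ℕ) (h : k ≤ W.length + 1) :
    wins k (a :: W) = (a :: W).take k ::ₘ wins k W := by
  have e : (a :: W).length + 1 - k = (W.length + 1 - k) + 1 := by simp; omega
  unfold wins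
  rw [e]
  simp only [Multiset.range, Multiset.map_coe, Multiset.cons_coe, List.range_succ_eq_map,
    List.map_cons, List.map_map]
  rfl

theorem count_wins (p n : ℕ) (w : List ℕ) :
    (wins w.length (wordOf p n)).count w = subwordCount p n w := by
  unfold wins subwordCount
  rw [Multiset.count_map]
  simp only [Finset.card, Finset.filter, Finset.range, eq_comm]

theorem wins_length (k : ℕ) (W w : List ℕ) (h : w ∈ wins k W) : w.length = k := by
  simp only [wins, Multiset.mem_map, Multiset.mem_range] at h
  obtain ⟨s, hs, rfl⟩ := h
  simp; omega

theorem wins_mem (k : ℕ) (W w : List ℕ) (h : w ∈ wins k W) : ∀ d ∈ w, d ∈ W := by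
  simp only [wins, Multiset.mem_map, Multiset.mem_range] at h
  obtain ⟨s, hs, rfl⟩ := h
  intro d hd
  exact List.mem_of_mem_drop (List.mem_of_mem_take hd)

theorem wins_dropLast (k : ℕ) (W : List ℕ) (h : k ≤ W.length) :
    wins k W = W.drop (W.length - k) ::ₘ (wins (k + 1) W).map (List.take k) := by
  induction W with
  | nil => simp at h; subst h; simp [wins]
  | cons a W ih =>
    rcases Nat.lt_or_ge W.length k with h1 | h1
    · have : k = W.length + 1 := by simp at h; omega
      subst this
      rw [wins_cons _ _ _ le_rfl, wins_short _ W (by omega), wins_short _ (a :: W) (by simp)]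
      simp
    · rw [wins_cons _ _ _ (by omega), wins_cons _ _ _ (by omega), ih h1]
      have : (a :: W).length - k = (W.length - k) + 1 := by simp; omega
      rw [this, List.drop_succ_cons, Multiset.map_cons, Multiset.cons_swap, List.take_take]
      simp

theorem G_prod (p k : ℕ) (W : List ℕ) : (X : ℤ[X]) ^ (k + 1) ∣
    (GH p W).1 * ((wins (k + 1) W).map fun w => (GH p w.tail).1).prod
      - (GH p (W.drop (W.length - k))).1 * ((wins (k + 1) W).map fun w => (GH p w).1).prod := by
  induction W with
  | nil => simp [wins]
  | cons a W ih =>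
    rcases Nat.lt_or_ge W.length k with h1 | h1
    · rw [wins_short _ (a :: W) (by simp; omega)]
      have : (a :: W).length - k = 0 := by simp; omega
      rw [this]; simp
    · rw [wins_cons _ _ _ (by omega)]
      have : (a :: W).length - k = (W.length - k) + 1 := by simp; omega
      rw [this, List.drop_succ_cons, Multiset.map_cons, Multiset.map_cons, Multiset.prod_cons,
        Multiset.prod_cons]
      have key := GH_key p a (W.take k) (W.drop k)
      rw [List.take_append_drop, List.length_take, min_eq_left h1] at key
      simp only [List.take_succ_cons, List.tail_cons]
      obtain ⟨r, hr⟩ := key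
      obtain ⟨s, hs⟩ := ih
      refine ⟨r * ((wins (k + 1) W).map fun w => (GH p w.tail).1).prod
        + (GH p (a :: W.take k)).1 * s, ?_⟩
      linear_combination ((wins (k + 1) W).map fun w => (GH p w.tail).1).prod * hr
        + (GH p (a :: W.take k)).1 * hs

theorem G_congr (p k : ℕ) (W W' : List ℕ) (h : wins (k + 1) W = wins (k + 1) W')
    (h' : W.drop (W.length - k) = W'.drop (W'.length - k)) :
    (X : ℤ[X]) ^ (k + 1) ∣ (GH p W).1 - (GH p W').1 := by
  have h1 := G_prod p k W
  have h2 := G_prod p k W'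
  rw [← h, ← h'] at h2
  have h3 := dvd_sub h1 h2
  have hn : ¬ (X : ℤ[X]) ∣ ((wins (k + 1) W).map fun w => (GH p w.tail).1).prod := by
    intro hd
    obtain ⟨w, -, hw⟩ := prime_X.exists_mem_multiset_map_dvd hd
    exact GH_eval0 p _ hw
  refine prime_X.pow_dvd_of_dvd_mul_right _ hn ?_
  convert h3 using 1
  ring

/-- borrow count on the low `L` positions -/
def bc (p L n k : ℕ) : ℕ :=
  ((Finset.range L).filter fun i => n % p ^ (i + 1) < k % p ^ (i + 1)).card

/-- value of a word -/
def wval (p : ℕ) : List ℕ → ℕ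
  | [] => 0
  | d :: W => d * p ^ W.length + wval p W

theorem wval_lt (p : ℕ) (W : List ℕ) (h : ∀ d ∈ W, d < p) : wval p W < p ^ W.length := by
  induction W with
  | nil => simp [wval]
  | cons d W ih =>
    simp only [List.mem_cons, forall_eq_or_imp] at h
    have := ih h.2
    simp only [wval, List.length_cons, pow_succ]
    have h1 : (d + 1) * p ^ W.length ≤ p * p ^ W.length := Nat.mul_le_mul_right _ h.1
    nlinarith

theorem bc_succ (p L d e n k : ℕ) (hn : n < p ^ L) (hk : k < p ^ L) (hd : d < p) (he : e < p) :
    bc p (L + 1) (d * p ^ L + n) (e * p ^ L + k) = bc p L n k +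
      if d * p ^ L + n < e * p ^ L + k then 1 else 0 := by
  have lt : ∀ d n, d < p → n < p ^ L → d * p ^ L + n < p ^ (L + 1) := by
    intro d n hd hn
    have h1 : (d + 1) * p ^ L ≤ p * p ^ L := Nat.mul_le_mul_right _ hd
    rw [pow_succ]; nlinarith
  have hm : ∀ i < L, ∀ d n, (d * p ^ L + n) % p ^ (i + 1) = n % p ^ (i + 1) := by
    intro i hi d n
    obtain ⟨c, hc⟩ : p ^ (i + 1) ∣ d * p ^ L := Dvd.dvd.mul_left (pow_dvd_pow _ hi) _
    rw [hc, Nat.mul_add_mod]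
  unfold bc
  rw [Finset.range_add_one, Finset.filter_insert, Nat.mod_eq_of_lt (lt d n hd hn),
    Nat.mod_eq_of_lt (lt e k he hk)]
  have hf : (Finset.range L).filter (fun i => (d * p ^ L + n) % p ^ (i + 1) <
      (e * p ^ L + k) % p ^ (i + 1)) =
      (Finset.range L).filter (fun i => n % p ^ (i + 1) < k % p ^ (i + 1)) := by
    apply Finset.filter_congr
    intro i hi
    rw [hm i (Finset.mem_range.1 hi), hm i (Finset.mem_range.1 hi)]
  rw [hf]
  split_ifs
  · rw [Finset.card_insert_of_notMem (by simp)]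
  · rfl

theorem sum_split (p q : ℕ) (f : ℕ → ℤ[X]) :
    ∑ k ∈ Finset.range (p * q), f k = ∑ k ∈ Finset.range q, ∑ e ∈ Finset.range p, f (e * q + k) := by
  rw [Finset.sum_comm]
  induction p with
  | zero => simp
  | succ p ih => rw [Nat.succ_mul, Finset.sum_range_add, ih, Finset.sum_range_succ]

theorem sum_le_const (p d : ℕ) (h : d ≤ p) (c : ℤ[X]) :
    ∑ e ∈ Finset.range p, (if e < d then c else 0) = (d : ℤ[X]) * c := by
  rw [← Finset.sum_filter]
  have : (Finset.range p).filter (fun e => e < d) = Finset.range d := by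
    ext e; simp; omega
  rw [this]; simp

theorem sum_ge_const (p d : ℕ) (h : d ≤ p) (c : ℤ[X]) :
    ∑ e ∈ Finset.range p, (if e < d then 0 else c) = ((p : ℤ[X]) - (d : ℤ[X])) * c := by
  have h1 := sum_le_const p d h c
  have h2 : ∑ e ∈ Finset.range p, (if e < d then c else 0) +
      ∑ e ∈ Finset.range p, (if e < d then 0 else c) = (p : ℤ[X]) * c := by
    rw [← Finset.sum_add_distrib, Finset.sum_congr rfl (g := fun _ => c)]
    · simp
    · intro e _; split_ifs <;> simp
  linear_combination h2 - h1

theorem digit_lt (q d e n k : ℕ) (hn : n < q) (hk : k < q) :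
    d * q + n < e * q + k ↔ if n < k then ¬ e < d else ¬ e < d + 1 := by
  rcases lt_trichotomy d e with h | h | h
  · have := Nat.mul_le_mul_right q (show d + 1 ≤ e from h)
    rw [add_mul] at this
    split_ifs <;> constructor <;> intros <;> omega
  · subst h; split_ifs <;> omega
  · have := Nat.mul_le_mul_right q (show e + 1 ≤ d from h)
    rw [add_mul] at this
    split_ifs <;> constructor <;> intros <;> omega

theorem GH_eq (p : ℕ) (W : List ℕ) (h : ∀ d ∈ W, d < p) :
    (GH p W).1 = ∑ k ∈ Finset.range (p ^ W.length),
      (if wval p W < k then 0 else (X : ℤ[X]) ^ bc p W.length (wval p W) k) ∧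
    (GH p W).2 = ∑ k ∈ Finset.range (p ^ W.length),
      (if wval p W < k then (X : ℤ[X]) ^ bc p W.length (wval p W) k else 0) := by
  induction W with
  | nil => simp [GH, wval, bc]
  | cons d W ih =>
    simp only [List.mem_cons, forall_eq_or_imp] at h
    obtain ⟨i1, i2⟩ := ih h.2
    have hv := wval_lt p W h.2
    have hd := h.1
    simp only [GH, wval, List.length_cons]
    rw [pow_succ, mul_comm (p ^ _) p, sum_split, sum_split, i1, i2]
    simp only [Finset.mul_sum, ← Finset.sum_add_distrib]
    constructor
    · refine Finset.sum_congr rfl fun k hk => ?_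
      rw [Finset.mem_range] at hk
      rw [Finset.sum_congr rfl (g := fun e : ℕ => if e < (if wval p W < k then d else d + 1) then
        (X : ℤ[X]) ^ bc p W.length (wval p W) k else 0)]
      · rw [sum_le_const _ _ (by split_ifs <;> omega)]
        split_ifs <;> push_cast <;> ring
      · intro e he
        rw [Finset.mem_range] at he
        rw [bc_succ _ _ _ _ _ _ hv hk hd he]
        simp only [digit_lt _ d e _ _ hv hk]
        split_ifs <;> simp_all
    · refine Finset.sum_congr rfl fun k hk => ?_
      rw [Finset.mem_range] at hk
      rw [Finset.sum_congr rfl (g := fun e : ℕ => if e < (if wval p W < k then d else d + 1) then 0 else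
        X * (X : ℤ[X]) ^ bc p W.length (wval p W) k)]
      · rw [sum_ge_const _ _ (by split_ifs <;> omega)]
        split_ifs <;> push_cast <;> ring
      · intro e he
        rw [Finset.mem_range] at he
        rw [bc_succ _ _ _ _ _ _ hv hk hd he]
        simp only [digit_lt _ d e _ _ hv hk]
        split_ifs <;> simp_all [pow_succ'] 

theorem wval_eq (p : ℕ) (W : List ℕ) : wval p W = Nat.ofDigits p W.reverse := by
  induction W with
  | nil => simp [wval]
  | cons d W ih => rw [wval, ih, List.reverse_cons, Nat.ofDigits_append]; simp; ring

theorem carry_iff (q n k : ℕ) (hq : 0 < q) (h : k ≤ n) :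
    q ≤ k % q + (n - k) % q ↔ n % q < k % q := by
  obtain ⟨j, rfl⟩ := Nat.exists_eq_add_of_le h
  rw [Nat.add_sub_cancel_left]
  have h1 := Nat.mod_lt k hq
  have h2 := Nat.mod_lt j hq
  rw [Nat.add_mod k j q]
  rcases Nat.lt_or_ge (k % q + j % q) q with h3 | h3
  · rw [Nat.mod_eq_of_lt h3]; omega
  · have h4 : (k % q + j % q) % q = k % q + j % q - q := by
      rw [Nat.mod_eq_sub_mod h3]
      exact Nat.mod_eq_of_lt (by omega)
    rw [h4]; omega

theorem val_choose (p : ℕ) (hp : p.Prime) (L n k : ℕ) (hn : n < p ^ L) (hk : k ≤ n) :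
    padicValNat p (n.choose k) = bc p L n k := by
  have := Fact.mk hp
  have hlog : Nat.log p n < L + 1 := by
    rcases Nat.eq_zero_or_pos n with rfl | h0
    · simp
    · exact (Nat.log_lt_of_lt_pow (by omega) hn).trans (Nat.lt_succ_self _)
  rw [padicValNat_choose hk hlog]
  unfold bc
  symm
  apply Finset.card_bij (fun i _ => i + 1)
  · intro i hi
    simp only [Finset.mem_filter, Finset.mem_range, Finset.mem_Ico] at hi ⊢
    exact ⟨by omega, (carry_iff _ _ _ (pow_pos hp.pos _) hk).2 hi.2⟩
  · intro i _ j _ h; omega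
  · intro i hi
    simp only [Finset.mem_filter, Finset.mem_range, Finset.mem_Ico] at hi
    refine ⟨i - 1, ?_, by omega⟩
    simp only [Finset.mem_filter, Finset.mem_range]
    rw [Nat.sub_add_cancel hi.1.1]
    exact ⟨by omega, (carry_iff _ _ _ (pow_pos hp.pos _) hk).1 hi.2⟩

theorem wordOf_lt (p : ℕ) (hp : p.Prime) (n : ℕ) : ∀ d ∈ wordOf p n, d < p := by
  intro d hd
  exact Nat.digits_lt_base hp.one_lt (List.mem_reverse.1 hd)

theorem rowCount_eq_s19 (p : ℕ) (hp : p.Prime) (α n : ℕ) :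
    (rowCount (p ^ α) n : ℤ) = ∑ j ∈ Finset.range α, (GH p (wordOf p n)).1.coeff j := by
  have := Fact.mk hp
  have hval : wval p (wordOf p n) = n := by
    rw [wval_eq, wordOf, List.reverse_reverse, Nat.ofDigits_digits]
  have hlt := wval_lt p _ (wordOf_lt p hp n)
  rw [(GH_eq p _ (wordOf_lt p hp n)).1]
  rw [hval] at hlt ⊢
  generalize (wordOf p n).length = L at *
  have e : ∑ k ∈ Finset.range (p ^ L), (if n < k then 0 else (X : ℤ[X]) ^ bc p L n k)
      = ∑ k ∈ Finset.range (n + 1), (X : ℤ[X]) ^ bc p L n k := by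
    have : Finset.range (n + 1) = (Finset.range (p ^ L)).filter (fun k => ¬ n < k) := by
      ext k; simp; omega
    rw [this, Finset.sum_filter]
    refine Finset.sum_congr rfl fun k _ => ?_
    split_ifs <;> rfl
  rw [e]
  simp only [finsetSum_coeff, coeff_X_pow]
  rw [Finset.sum_comm]
  unfold rowCount
  rw [Finset.card_filter, Nat.cast_sum]
  refine Finset.sum_congr rfl fun k hk => ?_
  rw [Finset.mem_range] at hk
  have hk' : k ≤ n := by omega
  simp only [padicValNat_dvd_iff_le (Nat.choose_pos hk').ne', val_choose p hp L n k hlt hk']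
  simp

theorem wins_word (p : ℕ) (hp : p.Prime) (α : ℕ) (m n : ℕ)
    (h : ∀ w : List ℕ, w ≠ [] → w.length ≤ α → (∀ d ∈ w, d < p) →
      subwordCount p m w = subwordCount p n w) (k : ℕ) (h1 : 1 ≤ k) (h2 : k ≤ α) :
    wins k (wordOf p m) = wins k (wordOf p n) := by
  ext w
  by_cases hl : w.length = k
  · subst hl
    by_cases hd : ∀ d ∈ w, d < p
    · rw [count_wins, count_wins]
      exact h w (by rintro rfl; simp at h1) h2 hd
    · rw [Multiset.count_eq_zero_of_notMem, Multiset.count_eq_zero_of_notMem]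
      · exact fun hw => hd fun d hdw => wordOf_lt p hp n d (wins_mem _ _ _ hw d hdw)
      · exact fun hw => hd fun d hdw => wordOf_lt p hp m d (wins_mem _ _ _ hw d hdw)
  · rw [Multiset.count_eq_zero_of_notMem, Multiset.count_eq_zero_of_notMem]
    · exact fun hw => hl (wins_length _ _ _ hw)
    · exact fun hw => hl (wins_length _ _ _ hw)

theorem suffix_eq (k : ℕ) (W W' : List ℕ) (hl : W.length = W'.length)
    (h : ∀ j, 1 ≤ j → j ≤ k + 1 → wins j W = wins j W') :
    W.drop (W.length - k) = W'.drop (W'.length - k) := by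
  obtain ⟨j, hj, hjk, e⟩ : ∃ j, j ≤ W.length ∧ j ≤ k ∧ W.length - k = W.length - j :=
    ⟨min k W.length, by omega, by omega, by omega⟩
  rw [← hl, e]
  rcases Nat.eq_zero_or_pos j with rfl | h0
  · rw [Nat.sub_zero, List.drop_length, hl, List.drop_length]
  have h1 := h j h0 (by omega)
  rw [wins_dropLast j W hj, wins_dropLast j W' (hl ▸ hj), h (j + 1) (by omega) (by omega)] at h1
  rw [hl] at h1 ⊢
  exact (Multiset.cons_inj_left _).1 h1

theorem rowCount_congr (p : ℕ) (hp : p.Prime) (α : ℕ) (hα : 1 ≤ α) (m n : ℕ)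
    (h : ∀ w : List ℕ, w ≠ [] → w.length ≤ α → (∀ d ∈ w, d < p) →
      subwordCount p m w = subwordCount p n w) :
    rowCount (p ^ α) m = rowCount (p ^ α) n := by
  obtain ⟨k, rfl⟩ : ∃ k, α = k + 1 := ⟨α - 1, by omega⟩
  have hw := wins_word p hp _ m n h
  have hl : (wordOf p m).length = (wordOf p n).length := by
    have := congrArg Multiset.card (hw 1 le_rfl hα)
    simpa [wins] using this
  have hd := G_congr p k _ _ (hw _ hα le_rfl) (suffix_eq k _ _ hl hw)
  rw [X_pow_dvd_iff] at hd
  have : (rowCount (p ^ (k + 1)) m : ℤ) = rowCount (p ^ (k + 1)) n := by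
    rw [rowCount_eq_s19 p hp, rowCount_eq_s19 p hp]
    refine Finset.sum_congr rfl fun j hj => ?_
    have := hd j (Finset.mem_range.1 hj)
    rw [coeff_sub] at this
    linarith
  exact_mod_cast this

/-- For a prime `p` and `α ≥ 1`: the ratio `a_{p^α}(n)/a_p(n)` depends only on the numbers of
occurrences of nonempty subwords of length at most `α` in the base-`p` representation of `n`.
That is, if `|m|_w = |n|_w` for every nonempty word `w` of length at most `α` over the digit
alphabet `{0, …, p−1}`, then `a_{p^α}(m) · a_p(n) = a_{p^α}(n) · a_p(m)`. -/
theorem stmt19 (p : ℕ) (hp : p.Prime) (α : ℕ) (hα : 1 ≤ α) (m n : ℕ)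
    (h : ∀ w : List ℕ, w ≠ [] → w.length ≤ α → (∀ d ∈ w, d < p) →
      subwordCount p m w = subwordCount p n w) :
    rowCount (p ^ α) m * rowCount p n = rowCount (p ^ α) n * rowCount p m := by
  rw [rowCount_congr p hp α hα m n h]
  have h1 := rowCount_congr p hp 1 le_rfl m n fun w h1 h2 h3 => h w h1 (h2.trans hα) h3
  rw [pow_one] at h1
  rw [h1]
end
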